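/- arXiv:2202.04026 — 2 statements merged into one kernel-verified Lean document; each statement's English description precedes it below -/
import Mathlib

section
/- Let (X*,y*) be a saddle point of min_{X∈S_n} max_{y∈K} f(X,y), let r̃ be the multiplicity of λ_n(∇_X f(X*,y*)), and for 1 ≤ j ≤ n−1 set δ(j) = λ_{n−j}(∇_X f(X*,y*)) − λ_n(∇_X f(X*,y*)). Let β > 0 be such that (X,y) ↦ (∇_X f(X,y), −∇_y f(X,y)) is β-Lipschitz on S_n × K in the product norm, and let η ≥ 0 with ηβ < 1. Then for any r with r̃ ≤ r ≤ n−1 and any (X,y) ∈ S_n × K satisfying ‖(X,y) − (X*,y*)‖ ≤ [ η / ( 1 + √2·η·max{β_X, β_Xy}·(1 + 1/√(1 − η²β²)) ) ] · max{ √r̃·δ(r−r̃+1)/2, δ(r)/(1 + 1/√r̃) } (with δ(r−r̃+1) interpreted only when r ≥ 2r̃−1, else that term is omitted), it holds that rank( Π_{S_n}[ X − η∇_X f(X,y) ] ) ≤ r and rank( Π_{S_n}[ X − η∇_X f(Z₊,w₊) ] ) ≤ r, where Z₊ = Π_{S_n}[X − η∇_X f(X,y)] and w₊ = Π_K[y +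 η∇_y f(X,y)]. -/
open scoped BigOperators RealInnerProductSpace
open Matrix

noncomputable section

abbrev Mat (n : ℕ) := Matrix (Fin n) (Fin n) ℝ
abbrev Vec (m : ℕ) := EuclideanSpace ℝ (Fin m)

/-- Trace inner product `⟨A,B⟩ = Tr(AB)`. -/
def mip {n : ℕ} (A B : Mat n) : ℝ := (A * B).trace

/-- Frobenius norm. -/
def frob {n : ℕ} (A : Mat n) : ℝ := Real.sqrt (∑ i, ∑ j, (A i j) ^ 2)

/-- The set of symmetric `n × n` real matrices (the space `𝕊ⁿ`). -/
def SymM (n : ℕ) : Set (Mat n) := {X | X.IsSymm}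

/-- The spectrahedron `S_n`. -/
def Spectra (n : ℕ) : Set (Mat n) := {X | X.trace = 1 ∧ X.PosSemidef}

/-- `lam A k` : the `k`-th largest eigenvalue of a symmetric matrix `A` (1-indexed,
so `lam A 1 = λ₁(A)` is the largest and `lam A n = λₙ(A)` is the smallest);
junk value otherwise. -/
def lam {n : ℕ} (A : Mat n) (k : ℕ) : ℝ :=
  if h : k - 1 < n then
    if hA : A.IsHermitian then
      hA.eigenvalues (Tuple.sort hA.eigenvalues (Fin.rev ⟨k - 1, h⟩))
    else 0
  else 0

/-- Multiplicity of the smallest eigenvalue of `A`. -/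
def multMin {n : ℕ} (A : Mat n) : ℕ :=
  letI := Classical.decPred fun k : ℕ => lam A k = lam A n
  ((Finset.Icc 1 n).filter fun k => lam A k = lam A n).card

/-- Subdifferential of `g : 𝕊ⁿ → ℝ` at `X`. -/
def subdiff {n : ℕ} (g : Mat n → ℝ) (X : Mat n) : Set (Mat n) :=
  {G | G.IsSymm ∧ ∀ Y ∈ SymM n, g Y ≥ g X + mip G (Y - X)}

/-- Euclidean (Frobenius-norm) projection onto `C ⊆ 𝕊ⁿ`. -/
def mproj {n : ℕ} (C : Set (Mat n)) (X : Mat n) : Mat n :=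
  Classical.epsilon fun P => P ∈ C ∧ ∀ Q ∈ C, frob (X - P) ≤ frob (X - Q)

/-- Euclidean projection onto `C ⊆ ℝᵐ`. -/
def vproj {m : ℕ} (C : Set (Vec m)) (x : Vec m) : Vec m :=
  Classical.epsilon fun p => p ∈ C ∧ ∀ q ∈ C, ‖x - p‖ ≤ ‖x - q‖

/-- Norm on the product space `𝕊ⁿ × ℝᵐ`. -/
def pnorm {n m : ℕ} (X : Mat n) (y : Vec m) : ℝ := Real.sqrt (frob X ^ 2 + ‖y‖ ^ 2)

/-!
Put `G = ∇_X f(X*, y*)`. First-order optimality of `X*` says that the columns of `X*` lie in the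
eigenspace of the smallest eigenvalue `λₙ` of `G`. If `Z` is the projection of `P = X* - η G + E`
onto the spectrahedron, then `A = P - Z` lies in the normal cone at `Z`, so for some multiplier `σ`
both `σ I - A ⪰ 0` and `(σ I - A) Z = 0`. An orthogonal projection of rank `s` sees the
perturbation `E` only up to `√s ‖E‖_F`, whence two opposite bounds on `σ`:

* pairing `P` with the spectral projection of `λₙ`, whose rank is the multiplicity `r̃`, gives
  `σ ≥ -η λₙ - ‖E‖_F / √r̃`;
* if `rank Z > r`, then for `k ≤ r` with `λₙ < λₙ₋ₖ` the range of `Z` contains an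
  `(r + 1 - k)`-dimensional space orthogonal to all eigenvectors of `G` with eigenvalue below
  `λₙ₋ₖ`, and pairing with its projection gives `σ < -η λₙ₋ₖ + ‖E‖_F / √(r + 1 - k)`.

Hence `rank Z > r` forces `‖E‖_F` to be large; `k = r` and `k = r - r̃ + 1` give the two gaps in the
radius. For a projected gradient step `E` is the sum of `X - X*` and a multiple of a difference of
gradients, which smoothness bounds, and the intermediate point of the extragradient step is at most
`1 + η β` times as far from the saddle point as `(X, y)`.
-/

open Filter Topology

section NearestPoint

variable {H : Type*} [NormedAddCommGroup H] {C : Set H} {x p : H}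

lemma norm_sub_eq_iInf_iff_forall_le (hp : p ∈ C) :
    ‖x - p‖ = ⨅ q : C, ‖x - q‖ ↔ ∀ q ∈ C, ‖x - p‖ ≤ ‖x - q‖ := by
  have hbdd : BddBelow (Set.range fun q : C => ‖x - q‖) :=
    ⟨0, Set.forall_mem_range.2 fun _ => norm_nonneg _⟩
  have : Nonempty C := ⟨⟨p, hp⟩⟩
  exact ⟨fun h q hq => h.trans_le (ciInf_le hbdd ⟨q, hq⟩), fun h =>
    le_antisymm (le_ciInf fun q => h q q.2) (ciInf_le hbdd ⟨p, hp⟩)⟩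

variable [InnerProductSpace ℝ H]

lemma exists_mem_forall_norm_sub_le (hne : C.Nonempty) (hcomplete : IsComplete C)
    (hconvex : Convex ℝ C) (x : H) : ∃ p, p ∈ C ∧ ∀ q ∈ C, ‖x - p‖ ≤ ‖x - q‖ := by
  obtain ⟨p, hp, hpx⟩ := exists_norm_eq_iInf_of_complete_convex hne hcomplete hconvex x
  exact ⟨p, hp, (norm_sub_eq_iInf_iff_forall_le hp).1 hpx⟩

lemma inner_sub_sub_nonpos_of_forall_norm_sub_le (hconvex : Convex ℝ C) (hp : p ∈ C)
    (hmin : ∀ q ∈ C, ‖x - p‖ ≤ ‖x - q‖) : ∀ q ∈ C, ⟪x - p, q - p⟫ ≤ 0 :=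
  (norm_eq_iInf_iff_real_inner_le_zero hconvex hp).1 ((norm_sub_eq_iInf_iff_forall_le hp).2 hmin)

lemma norm_sub_le_of_projected_step {s z g gs : H} {η : ℝ} (hη : 0 ≤ η)
    (hz : ⟪x - η • g - z, s - z⟫ ≤ 0) (hs : 0 ≤ ⟪gs, z - s⟫) :
    ‖z - s‖ ≤ ‖x - s - η • (g - gs)‖ := by
  have hle : ‖z - s‖ * ‖z - s‖ ≤ ‖x - s - η • (g - gs)‖ * ‖z - s‖ :=
    calc ‖z - s‖ * ‖z - s‖ = ⟪z - s, z - s⟫ := (real_inner_self_eq_norm_mul_norm _).symm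
      _ ≤ ⟪z - s, z - s⟫ - ⟪x - η • g - z, s - z⟫ + η * ⟪gs, z - s⟫ := by
        linarith [mul_nonneg hη hs]
      _ = ⟪x - s - η • (g - gs), z - s⟫ := by
        rw [← neg_sub z s, inner_neg_right, sub_neg_eq_add, ← real_inner_smul_left,
          ← inner_add_left, ← inner_add_left]
        congr 1
        module
      _ ≤ ‖x - s - η • (g - gs)‖ * ‖z - s‖ := real_inner_le_norm _ _
  rcases (norm_nonneg (z - s)).eq_or_lt with hzero | hpos
  · exact hzero ▸ norm_nonneg _
  · exact le_of_mul_le_mul_right hle hpos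

lemma inner_nonneg_of_forall_le_of_gradient_inequality {φ : H → ℝ} {G : H → H}
    (hconvex : Convex ℝ C) (hp : p ∈ C) (hmin : ∀ q ∈ C, φ p ≤ φ q)
    (hgrad : ∀ q ∈ C, φ q + ⟪G q, p - q⟫ ≤ φ p) (hG : ContinuousWithinAt G C p) :
    ∀ q ∈ C, 0 ≤ ⟪G p, q - p⟫ := by
  intro q hq
  let γ : ℝ → H := fun t => p + t • (q - p)
  have hγmem : ∀ᶠ t in 𝓝[>] (0 : ℝ), γ t ∈ C :=
    mem_of_superset (Ioc_mem_nhdsGT one_pos) fun t ht =>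
      hconvex.add_smul_sub_mem hp hq ⟨ht.1.le, ht.2⟩
  have hγ : Tendsto γ (𝓝[>] 0) (𝓝[C] p) := by
    refine tendsto_nhdsWithin_iff.2 ⟨?_, hγmem⟩
    have : ContinuousAt γ 0 := by fun_prop
    simpa [γ] using this.tendsto.mono_left nhdsWithin_le_nhds
  refine ge_of_tendsto ((hG.tendsto.comp hγ).inner tendsto_const_nhds) ?_
  filter_upwards [hγmem, self_mem_nhdsWithin] with t htC ht
  have hstep : φ (γ t) + ⟪G (γ t), p - γ t⟫ ≤ φ (γ t) := (hgrad _ htC).trans (hmin _ htC)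
  have hsub : p - γ t = -(t • (q - p)) := by simp [γ]
  rw [hsub, inner_neg_right, real_inner_smul_right] at hstep
  exact nonneg_of_mul_nonneg_right (show 0 ≤ t * ⟪G (γ t), q - p⟫ by linarith) ht

end NearestPoint

section Spectrahedron

lemma isSymm_of_mem_spectra {n : ℕ} {A : Mat n} (hA : A ∈ Spectra n) : A.IsSymm :=
  isHermitian_iff_isSymm.1 hA.2.isHermitian

lemma isClosed_setOf_posSemidef (ι : Type*) [Finite ι] :
    IsClosed {A : Matrix ι ι ℝ | A.PosSemidef} := by
  have := Fintype.ofFinite ι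
  simp only [posSemidef_iff_dotProduct_mulVec, IsHermitian, Set.ofPred_and, Set.ofPred_forall]
  refine (isClosed_eq (by fun_prop) (by fun_prop)).inter (isClosed_iInter fun x => ?_)
  exact isClosed_le (by fun_prop) (by fun_prop)

lemma isClosed_spectra (n : ℕ) : IsClosed (Spectra n) :=
  (isClosed_eq (by fun_prop) (by fun_prop)).inter (isClosed_setOf_posSemidef (Fin n))

lemma convex_spectra (n : ℕ) : Convex ℝ (Spectra n) := by
  rintro A ⟨hAtrace, hA⟩ B ⟨hBtrace, hB⟩ a b ha hb hab
  exact ⟨by simp [hAtrace, hBtrace, hab], (hA.smul ha).add (hB.smul hb)⟩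

end Spectrahedron

section Frobenius

attribute [local instance] Matrix.frobeniusNormedAddCommGroup Matrix.frobeniusNormedSpace

/-- The inner product `Tr (Aᵀ B)` inducing the Frobenius norm. -/
abbrev frobeniusInnerProductSpace (ι κ : Type*) [Fintype ι] [Fintype κ] :
    InnerProductSpace ℝ (Matrix ι κ ℝ) where
  inner A B := (Aᵀ * B).trace
  norm_sq_eq_re_inner A := by
    rw [frobenius_norm_def, ← Real.sqrt_eq_rpow, Real.sq_sqrt (by positivity)]
    simp [trace, mul_apply, Finset.sum_comm (γ := ι), ← sq]
  conj_inner_symm A B := by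
    simpa using (trace_transpose (Bᵀ * A)).symm
  add_left A B C := by simp [Matrix.add_mul]
  smul_left A B c := by simp

attribute [local instance] frobeniusInnerProductSpace

variable {n m : ℕ} {A : Mat n}

lemma frob_eq_norm (A : Mat n) : frob A = ‖A‖ := by
  simp [frob, frobenius_norm_def, Real.sqrt_eq_rpow]

lemma mip_eq_inner (hA : A.IsSymm) (B : Mat n) : mip A B = ⟪A, B⟫ := by
  rw [mip, ← hA.eq]
  simp [inner, hA.eq]

lemma frob_nonneg (A : Mat n) : 0 ≤ frob A := Real.sqrt_nonneg _

lemma frob_add_le (A B : Mat n) : frob (A + B) ≤ frob A + frob B := by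
  simpa only [frob_eq_norm] using norm_add_le A B

lemma frob_sub_smul_le {η : ℝ} (hη : 0 ≤ η) (A B : Mat n) :
    frob (A - η • B) ≤ frob A + η * frob B := by
  simpa only [frob_eq_norm, norm_smul, Real.norm_of_nonneg hη] using norm_sub_le A (η • B)

lemma abs_mip_le (hA : A.IsSymm) (B : Mat n) : |mip A B| ≤ frob A * frob B := by
  simpa only [mip_eq_inner hA, frob_eq_norm] using abs_real_inner_le_norm A B

lemma frob_sq_eq_mip_self (hA : A.IsSymm) : frob A ^ 2 = mip A A := by
  rw [mip_eq_inner hA, frob_eq_norm, real_inner_self_eq_norm_sq]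

lemma pnorm_eq_norm (A : Mat n) (y : Vec m) : pnorm A y = ‖WithLp.toLp 2 (A, y)‖ := by
  rw [pnorm, frob_eq_norm, WithLp.prod_norm_eq_of_L2, WithLp.toLp_fst, WithLp.toLp_snd]

lemma pnorm_sub_smul_le {η : ℝ} (hη : 0 ≤ η) (A B : Mat n) (y w : Vec m) :
    pnorm (A - η • B) (y - η • w) ≤ pnorm A y + η * pnorm B w := by
  have := norm_sub_le (WithLp.toLp 2 (A, y)) (η • WithLp.toLp 2 (B, w))
  rw [norm_smul, Real.norm_of_nonneg hη, ← WithLp.toLp_smul, ← WithLp.toLp_sub] at this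
  simpa only [pnorm_eq_norm, Prod.smul_mk, Prod.mk_sub_mk] using this

lemma mproj_spectra_spec (hne : (Spectra n).Nonempty) (hA : A.IsSymm) :
    mproj (Spectra n) A ∈ Spectra n ∧
      ∀ Q ∈ Spectra n, mip (A - mproj (Spectra n) A) (Q - mproj (Spectra n) A) ≤ 0 := by
  obtain ⟨hmem, hmin⟩ : mproj (Spectra n) A ∈ Spectra n ∧
      ∀ Q ∈ Spectra n, ‖A - mproj (Spectra n) A‖ ≤ ‖A - Q‖ := by
    simp only [← frob_eq_norm]
    refine Classical.epsilon_spec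
      (p := fun P => P ∈ Spectra n ∧ ∀ Q ∈ Spectra n, frob (A - P) ≤ frob (A - Q)) ?_
    simp only [frob_eq_norm]
    exact exists_mem_forall_norm_sub_le hne (isClosed_spectra n).isComplete
      (convex_spectra n) A
  refine ⟨hmem, fun Q hQ => ?_⟩
  rw [mip_eq_inner (hA.sub (isSymm_of_mem_spectra hmem))]
  exact inner_sub_sub_nonpos_of_forall_norm_sub_le (convex_spectra n) hmem hmin Q hQ

lemma frob_sub_le_of_projected_step {X S Z G Gs : Mat n} {η : ℝ} (hη : 0 ≤ η)
    (hstep : (X - η • G - Z).IsSymm) (hGs : Gs.IsSymm) (hZ : mip (X - η • G - Z) (S - Z) ≤ 0)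
    (hS : 0 ≤ mip Gs (Z - S)) : frob (Z - S) ≤ frob (X - S - η • (G - Gs)) := by
  rw [mip_eq_inner hstep] at hZ
  rw [mip_eq_inner hGs] at hS
  simpa only [frob_eq_norm] using norm_sub_le_of_projected_step hη hZ hS

lemma mip_nonneg_of_forall_le_of_gradient_inequality {φ : Mat n → ℝ} {G : Mat n → Mat n}
    {S : Mat n} {L : ℝ} (hS : S ∈ Spectra n) (hmin : ∀ Q ∈ Spectra n, φ S ≤ φ Q)
    (hsymm : ∀ Q ∈ Spectra n, (G Q).IsSymm)
    (hgrad : ∀ Q ∈ Spectra n, φ Q + mip (G Q) (S - Q) ≤ φ S)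
    (hLip : ∀ Q ∈ Spectra n, ∀ R ∈ Spectra n, frob (G Q - G R) ≤ L * frob (Q - R)) :
    ∀ Q ∈ Spectra n, 0 ≤ mip (G S) (Q - S) := by
  simp only [frob_eq_norm, ← dist_eq_norm] at hLip
  have hcont : ContinuousWithinAt G (Spectra n) S :=
    (LipschitzOnWith.of_dist_le' hLip).continuousOn S hS
  intro Q hQ
  rw [mip_eq_inner (hsymm S hS)]
  refine inner_nonneg_of_forall_le_of_gradient_inequality (convex_spectra n) hS hmin
    (fun R hR => ?_) hcont Q hQ
  rw [← mip_eq_inner (hsymm R hR)]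
  exact hgrad R hR

end Frobenius

section TraceAndProjections

open scoped MatrixOrder

variable {ι : Type*} [Fintype ι] {A B P Q Z : Matrix ι ι ℝ} {σ : ℝ}

lemma posSemidef_of_isStarProjection (hQ : IsStarProjection Q) : Q.PosSemidef :=
  hQ.nonneg.posSemidef

lemma trace_mul_conjTranspose_mul_self (A B : Matrix ι ι ℝ) :
    (A * (Bᴴ * B)).trace = (B * A * Bᴴ).trace := by
  rw [← Matrix.mul_assoc, trace_mul_comm, ← Matrix.mul_assoc]

lemma mul_eq_zero_iff_range_le_ker :
    A * B = 0 ↔ LinearMap.range B.mulVecLin ≤ LinearMap.ker A.mulVecLin := by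
  classical
  rw [LinearMap.range_le_ker_iff, ← mulVecLin_mul, ← toLin'_apply',
    map_eq_zero_iff _ toLin'.injective]

lemma trace_mul_nonneg (hA : A.PosSemidef) (hB : B.PosSemidef) : 0 ≤ (A * B).trace := by
  classical
  obtain ⟨C, rfl⟩ := CStarAlgebra.nonneg_iff_eq_star_mul_self.mp hB.nonneg
  rw [star_eq_conjTranspose, trace_mul_conjTranspose_mul_self]
  exact (hA.mul_mul_conjTranspose_same C).trace_nonneg

lemma mul_eq_zero_of_trace_mul_eq_zero (hA : A.PosSemidef) (hB : B.PosSemidef)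
    (h : (A * B).trace = 0) : A * B = 0 := by
  classical
  obtain ⟨C, rfl⟩ := CStarAlgebra.nonneg_iff_eq_star_mul_self.mp hA.nonneg
  obtain ⟨D, rfl⟩ := CStarAlgebra.nonneg_iff_eq_star_mul_self.mp hB.nonneg
  simp only [star_eq_conjTranspose] at h ⊢
  have hCD : C * Dᴴ = 0 := by
    rw [← trace_conjTranspose_mul_self_eq_zero_iff, ← h, trace_mul_conjTranspose_mul_self]
    simp only [conjTranspose_mul, conjTranspose_conjTranspose, Matrix.mul_assoc]
  rw [Matrix.mul_assoc, ← Matrix.mul_assoc C, hCD, Matrix.zero_mul, Matrix.mul_zero]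

lemma rank_le_finrank_range_inf_ker_add_rank (Z R : Matrix ι ι ℝ) :
    Z.rank ≤ Module.finrank ℝ
      ↥(LinearMap.range Z.mulVecLin ⊓ LinearMap.ker R.mulVecLin) + R.rank := by
  have hsum := Submodule.finrank_sup_add_finrank_inf_eq (LinearMap.range Z.mulVecLin)
    (LinearMap.ker R.mulVecLin)
  have hker := R.mulVecLin.finrank_range_add_finrank_ker
  have hsup := Submodule.finrank_le
    (LinearMap.range Z.mulVecLin ⊔ LinearMap.ker R.mulVecLin)
  rw [Matrix.rank, Matrix.rank]
  omega

lemma transpose_mul_self_eq_one_of_orthonormal {κ : Type*} [DecidableEq κ]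
    {u : κ → EuclideanSpace ℝ ι} (hu : Orthonormal ℝ u) :
    (of fun i j => u j i)ᵀ * (of fun i j => u j i) = (1 : Matrix κ κ ℝ) := by
  ext j k
  rw [one_apply, ← orthonormal_iff_ite.1 hu j k]
  simp [mul_apply, PiLp.inner_apply, mul_comm]

lemma exists_isStarProjection_range_le {S : Submodule ℝ (ι → ℝ)} {s : ℕ}
    (hs : s ≤ Module.finrank ℝ S) :
    ∃ Q : Matrix ι ι ℝ, IsStarProjection Q ∧ Q.trace = s ∧ LinearMap.range Q.mulVecLin ≤ S := by
  let T : Submodule ℝ (EuclideanSpace ℝ ι) := S.comap (WithLp.linearEquiv 2 ℝ (ι → ℝ)).toLinearMap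
  have hT : Module.finrank ℝ T = Module.finrank ℝ S :=
    ((WithLp.linearEquiv 2 ℝ (ι → ℝ)).ofSubmodule' S).finrank_eq
  let b : Fin s → T := stdOrthonormalBasis ℝ T ∘ Fin.castLE (hs.trans_eq hT.symm)
  have hb : Orthonormal ℝ b :=
    (stdOrthonormalBasis ℝ T).orthonormal.comp _ (Fin.castLE_injective _)
  let U : Matrix ι (Fin s) ℝ := of fun i j => (b j).1 i
  have hU : Uᵀ * U = 1 :=
    transpose_mul_self_eq_one_of_orthonormal (hb.comp_linearIsometry T.subtypeₗᵢ)
  refine ⟨U * Uᵀ, ⟨?_, ?_⟩, ?_, ?_⟩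
  · rw [IsIdempotentElem, Matrix.mul_assoc, ← Matrix.mul_assoc Uᵀ, hU, Matrix.one_mul]
  · simpa using (isHermitian_mul_conjTranspose_self U).isSelfAdjoint
  · rw [trace_mul_comm, hU, trace_one, Fintype.card_fin]
  · rintro _ ⟨v, rfl⟩
    rw [mulVecLin_apply, ← mulVec_mulVec, mulVec_eq_sum]
    refine S.sum_mem fun j _ => ?_
    rw [op_smul_eq_smul]
    exact S.smul_mem _ (b j).2

lemma exists_isStarProjection_range_le_and_mul_eq_zero (Z R : Matrix ι ι ℝ) {s : ℕ}
    (hrank : R.rank + s ≤ Z.rank) :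
    ∃ Q : Matrix ι ι ℝ, IsStarProjection Q ∧ Q.trace = s ∧
      LinearMap.range Q.mulVecLin ≤ LinearMap.range Z.mulVecLin ∧ R * Q = 0 := by
  have hdim : s ≤ Module.finrank ℝ
      ↥(LinearMap.range Z.mulVecLin ⊓ LinearMap.ker R.mulVecLin) := by
    have := rank_le_finrank_range_inf_ker_add_rank Z R
    omega
  obtain ⟨Q, hQ, htrace, hrange⟩ := exists_isStarProjection_range_le hdim
  exact ⟨Q, hQ, htrace, hrange.trans inf_le_left,
    mul_eq_zero_iff_range_le_ker.2 (hrange.trans inf_le_right)⟩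

lemma trace_mul_le_of_isStarProjection (hZ : Z.PosSemidef) (hQ : IsStarProjection Q) :
    (Z * Q).trace ≤ Z.trace := by
  classical
  have := trace_mul_nonneg hZ (posSemidef_of_isStarProjection hQ.one_sub)
  rw [Matrix.mul_sub, Matrix.mul_one, trace_sub] at this
  linarith

lemma trace_mul_pos_of_range_le (hZ : Z.PosSemidef) (hQ : IsStarProjection Q) (hQ0 : Q ≠ 0)
    (hrange : LinearMap.range Q.mulVecLin ≤ LinearMap.range Z.mulVecLin) : 0 < (Z * Q).trace := by
  classical
  have hQpos := posSemidef_of_isStarProjection hQ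
  refine (trace_mul_nonneg hZ hQpos).lt_of_ne' fun h => hQ0 ?_
  have hQZ : Q * Z = 0 := mul_eq_zero_of_trace_mul_eq_zero hQpos hZ (trace_mul_comm Z Q ▸ h)
  rw [← hQ.isIdempotentElem.eq]
  exact mul_eq_zero_iff_range_le_ker.2 (hrange.trans (mul_eq_zero_iff_range_le_ker.1 hQZ))

variable [DecidableEq ι]

lemma trace_mul_le_of_posSemidef (hZ : Z.PosSemidef) (hslack : (σ • 1 - (P - Z)).PosSemidef)
    (hQ : IsStarProjection Q) : (P * Q).trace ≤ σ * Q.trace + Z.trace := by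
  have h := trace_mul_nonneg hslack (posSemidef_of_isStarProjection hQ)
  simp only [Matrix.sub_mul, Matrix.smul_mul, Matrix.one_mul, trace_sub, trace_smul,
    smul_eq_mul] at h
  linarith [trace_mul_le_of_isStarProjection hZ hQ]

lemma lt_trace_mul_of_range_le (hZ : Z.PosSemidef) (hslack : (σ • 1 - (P - Z)) * Z = 0)
    (hQ : IsStarProjection Q) (hQ0 : Q ≠ 0)
    (hrange : LinearMap.range Q.mulVecLin ≤ LinearMap.range Z.mulVecLin) :
    σ * Q.trace < (P * Q).trace := by
  have hzero : (σ • 1 - (P - Z)) * Q = 0 :=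
    mul_eq_zero_iff_range_le_ker.2 (hrange.trans (mul_eq_zero_iff_range_le_ker.1 hslack))
  have h := congrArg trace hzero
  simp only [Matrix.sub_mul, Matrix.smul_mul, Matrix.one_mul, trace_sub, trace_smul,
    smul_eq_mul, trace_zero] at h
  linarith [trace_mul_pos_of_range_le hZ hQ hQ0 hrange]

end TraceAndProjections

section SpectralProjection

open scoped MatrixOrder

variable {ι : Type*} [Fintype ι] [DecidableEq ι] {G X Q : Matrix ι ι ℝ} {t : ℝ}

/-- The orthogonal projection onto the sum of the eigenspaces of the Hermitian matrix `G` with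
eigenvalue in `s`; for a matrix that is not Hermitian it is `0`. -/
def spectralProjection (G : Matrix ι ι ℝ) (s : Set ℝ) : Matrix ι ι ℝ :=
  cfc (s.indicator 1) G

lemma continuousOn_spectrum (f : ℝ → ℝ) (G : Matrix ι ι ℝ) : ContinuousOn f (spectrum ℝ G) :=
  G.finite_real_spectrum.continuousOn f

lemma isStarProjection_spectralProjection (G : Matrix ι ι ℝ) (s : Set ℝ) :
    IsStarProjection (spectralProjection G s) where
  isIdempotentElem := by
    rw [IsIdempotentElem, spectralProjection, ← cfc_mul _ _ G (continuousOn_spectrum _ G)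
      (continuousOn_spectrum _ G)]
    congr 1
    ext x
    by_cases hx : x ∈ s <;> simp [hx]
  isSelfAdjoint := cfc_predicate _ G

lemma rank_spectralProjection (hG : G.IsHermitian) (s : Set ℝ) [DecidablePred (· ∈ s)] :
    (spectralProjection G s).rank = Fintype.card {i // hG.eigenvalues i ∈ s} := by
  rw [spectralProjection, hG.cfc_eq, IsHermitian.cfc, Unitary.conjStarAlgAut_apply,
    rank_mul_eq_left_of_isUnit_det, rank_mul_eq_right_of_isUnit_det, rank_diagonal]
  · simp
  · exact UnitaryGroup.det_isUnit hG.eigenvectorUnitary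
  · exact UnitaryGroup.det_isUnit (star hG.eigenvectorUnitary)

lemma trace_spectralProjection (hG : G.IsHermitian) (s : Set ℝ) [DecidablePred (· ∈ s)] :
    (spectralProjection G s).trace = Fintype.card {i // hG.eigenvalues i ∈ s} := by
  rw [spectralProjection, hG.cfc_eq, IsHermitian.cfc, Unitary.conjStarAlgAut_apply,
    trace_mul_cycle]
  simp [trace_diagonal, Set.indicator_apply, Fintype.card_subtype]

lemma sub_smul_one_eq_cfc (hG : G.IsHermitian) (t : ℝ) : G - t • 1 = cfc (fun x => x - t) G := by
  rw [cfc_sub (fun x => x) (fun _ => t) G, cfc_id' ℝ G hG.isSelfAdjoint,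
    cfc_const t G hG.isSelfAdjoint, Algebra.algebraMap_eq_smul_one]

lemma mul_spectralProjection_singleton (hG : G.IsHermitian) (m : ℝ) :
    G * spectralProjection G {m} = m • spectralProjection G {m} := by
  have h : (G - m • 1) * spectralProjection G {m} = 0 := by
    rw [sub_smul_one_eq_cfc hG, spectralProjection,
      ← cfc_mul _ _ G (continuousOn_spectrum _ G) (continuousOn_spectrum _ G)]
    convert cfc_zero ℝ G using 2
    ext x
    by_cases hx : x = m <;> simp [hx]
  rwa [Matrix.sub_mul, Matrix.smul_mul, Matrix.one_mul, sub_eq_zero] at h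

-- On the spectrum `f x - f m = h x * (x - m)` for a function `h`, so `cfc f G - f m` is a left
-- multiple of `G - m`.
lemma cfc_mul_eq_smul_of_mul_eq_smul (hG : G.IsHermitian) (f : ℝ → ℝ) {m : ℝ}
    (hX : G * X = m • X) : cfc f G * X = f m • X := by
  let h : ℝ → ℝ := fun x => (f x - f m) / (x - m)
  have hfactor : cfc f G = f m • 1 + cfc h G * (G - m • 1) := by
    rw [sub_smul_one_eq_cfc hG, ← cfc_mul _ _ G (continuousOn_spectrum _ G)
      (continuousOn_spectrum _ G), ← Algebra.algebraMap_eq_smul_one,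
      ← cfc_const_add _ _ G (continuousOn_spectrum _ G) hG.isSelfAdjoint]
    congr 1
    ext x
    rcases eq_or_ne x m with rfl | hx
    · simp
    · rw [div_mul_cancel₀ _ (sub_ne_zero.2 hx), add_sub_cancel]
  rw [hfactor, Matrix.add_mul, Matrix.mul_assoc, Matrix.sub_mul, hX]
  simp

lemma posSemidef_sub_smul_one_mul_one_sub_spectralProjection (hG : G.IsHermitian) (t : ℝ) :
    ((G - t • 1) * (1 - spectralProjection G (Set.Iio t))).PosSemidef := by
  rw [sub_smul_one_eq_cfc hG, spectralProjection, ← cfc_one ℝ G hG.isSelfAdjoint,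
    ← cfc_sub _ _ G (continuousOn_spectrum _ G) (continuousOn_spectrum _ G),
    ← cfc_mul _ _ G (continuousOn_spectrum _ G) (continuousOn_spectrum _ G)]
  refine (cfc_nonneg fun x _ => ?_).posSemidef
  by_cases hx : x < t
  · simp [hx]
  · simpa [hx] using not_lt.1 hx

lemma mul_trace_le_trace_mul (hG : G.IsHermitian) (hQ : Q.PosSemidef)
    (hker : spectralProjection G (Set.Iio t) * Q = 0) : t * Q.trace ≤ (G * Q).trace := by
  have h := trace_mul_nonneg (posSemidef_sub_smul_one_mul_one_sub_spectralProjection hG t) hQ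
  rw [Matrix.mul_assoc, Matrix.sub_mul 1, hker, Matrix.one_mul, sub_zero, Matrix.sub_mul,
    Matrix.smul_mul, Matrix.one_mul, trace_sub, trace_smul, smul_eq_mul] at h
  linarith

end SpectralProjection

section SortedEigenvalues

variable {n : ℕ} {G : Mat n}

lemma lam_sub_eq_eigenvalues_sort (hG : G.IsHermitian) (i : Fin n) :
    lam G (n - i) = hG.eigenvalues (Tuple.sort hG.eigenvalues i) := by
  have hlt : n - i - 1 < n := by omega
  rw [lam, dif_pos hlt, dif_pos hG]
  congr 2
  ext
  simp only [Fin.val_rev]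
  omega

lemma lam_le_lam (hG : G.IsHermitian) {j k : ℕ} (hj : j < n) (hjk : k ≤ j) :
    lam G (n - k) ≤ lam G (n - j) := by
  rw [lam_sub_eq_eigenvalues_sort hG ⟨j, hj⟩, lam_sub_eq_eigenvalues_sort hG ⟨k, hjk.trans_lt hj⟩]
  exact Tuple.monotone_sort hG.eigenvalues hjk

lemma card_filter_lam (hG : G.IsHermitian) (p : ℝ → Prop) [DecidablePred p] :
    ((Finset.range n).filter fun j => p (lam G (n - j))).card =
      Fintype.card {i // p (hG.eigenvalues i)} := by
  rw [Fintype.card_subtype, Finset.card_filter, Finset.card_filter, ← Fin.sum_univ_eq_sum_range]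
  simp only [lam_sub_eq_eigenvalues_sort hG]
  exact Equiv.sum_comp _ fun i => if p (hG.eigenvalues i) then 1 else 0

lemma multMin_eq_card_eigenvalues (hG : G.IsHermitian) :
    multMin G = Fintype.card {i // hG.eigenvalues i = lam G n} := by
  classical
  rw [← card_filter_lam hG (· = lam G n), multMin]
  refine Finset.card_nbij' (n - ·) (n - ·) ?_ ?_ ?_ ?_
  all_goals
    intro k hk
    simp only [Finset.coe_filter, Set.mem_ofPred_eq, Finset.mem_Icc, Finset.mem_range] at hk ⊢
  · exact ⟨by omega, by rw [Nat.sub_sub_self hk.1.2]; exact hk.2⟩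
  · exact ⟨by omega, hk.2⟩
  · exact Nat.sub_sub_self hk.1.2
  · exact Nat.sub_sub_self hk.1.le

lemma card_eigenvalues_lt_lam_le (hG : G.IsHermitian) (k : ℕ) :
    Fintype.card {i // hG.eigenvalues i < lam G (n - k)} ≤ k := by
  rw [← card_filter_lam hG (· < lam G (n - k))]
  calc _ ≤ (Finset.range k).card := Finset.card_le_card fun j hj => by
        simp only [Finset.mem_filter, Finset.mem_range] at hj ⊢
        by_contra! hkj
        exact (lam_le_lam hG hj.1 hkj).not_gt hj.2
    _ = k := Finset.card_range k

lemma lam_lt_lam_sub_of_multMin_le (hG : G.IsHermitian) {k : ℕ} (hk : k < n)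
    (hmult : multMin G ≤ k) : lam G n < lam G (n - k) := by
  classical
  refine (lam_le_lam hG hk k.zero_le).lt_of_ne fun heq => ?_
  rw [multMin_eq_card_eigenvalues hG, ← card_filter_lam hG (· = lam G n)] at hmult
  have hsub : Finset.range (k + 1) ⊆ (Finset.range n).filter fun j => lam G (n - j) = lam G n := by
    intro j hj
    simp only [Finset.mem_filter, Finset.mem_range] at hj ⊢
    refine ⟨by omega, le_antisymm ?_ (lam_le_lam hG (by omega) j.zero_le)⟩
    exact (lam_le_lam hG hk (by omega)).trans_eq heq.symm
  have := Finset.card_le_card hsub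
  rw [Finset.card_range] at this
  omega

lemma multMin_pos (hn : 0 < n) : 0 < multMin G :=
  Finset.card_pos.2 ⟨n, by simp; omega⟩

end SortedEigenvalues

section NormalCone

variable {n : ℕ} {A G Q Z Xs : Mat n}

lemma mip_le_mip_mul_trace (hnormal : ∀ Q ∈ Spectra n, mip A (Q - Z) ≤ 0) (hQ : Q.PosSemidef) :
    mip A Q ≤ mip A Z * Q.trace := by
  rcases hQ.trace_nonneg.eq_or_lt with htrace | htrace
  · simp [mip, hQ.trace_eq_zero_iff.1 htrace.symm]
  · have hmem : Q.trace⁻¹ • Q ∈ Spectra n :=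
      ⟨by simp [htrace.ne'], hQ.smul (inv_nonneg.2 htrace.le)⟩
    have h := hnormal _ hmem
    simp only [mip, Matrix.mul_sub, Matrix.mul_smul, trace_sub, trace_smul, smul_eq_mul,
      sub_nonpos] at h ⊢
    rwa [inv_mul_le_iff₀ htrace, mul_comm] at h

lemma posSemidef_mip_smul_one_sub (hA : A.IsSymm)
    (hnormal : ∀ Q ∈ Spectra n, mip A (Q - Z) ≤ 0) : (mip A Z • 1 - A).PosSemidef := by
  rw [posSemidef_iff_dotProduct_mulVec]
  refine ⟨isHermitian_iff_isSymm.2 ((isSymm_one.smul _).sub hA), fun x => ?_⟩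
  have h := mip_le_mip_mul_trace hnormal (posSemidef_vecMulVec_self_star x)
  rw [mip, mul_vecMulVec, trace_vecMulVec, trace_vecMulVec, star_trivial] at h
  rw [sub_mulVec, smul_mulVec, one_mulVec, dotProduct_sub, dotProduct_smul, star_trivial,
    smul_eq_mul, dotProduct_comm x (A *ᵥ x)]
  linarith

lemma mip_smul_one_sub_mul_eq_zero (hA : A.IsSymm) (hZ : Z ∈ Spectra n)
    (hnormal : ∀ Q ∈ Spectra n, mip A (Q - Z) ≤ 0) : (mip A Z • 1 - A) * Z = 0 := by
  refine mul_eq_zero_of_trace_mul_eq_zero (posSemidef_mip_smul_one_sub hA hnormal) hZ.2 ?_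
  rw [Matrix.sub_mul, Matrix.smul_mul, Matrix.one_mul, trace_sub, trace_smul, hZ.1, mip,
    smul_eq_mul, mul_one, sub_self]

lemma trace_spectralProjection_lam (hG : G.IsHermitian) :
    (spectralProjection G {lam G n}).trace = multMin G := by
  classical
  rw [trace_spectralProjection hG, multMin_eq_card_eigenvalues hG]
  rfl

lemma rank_spectralProjection_Iio_lam_le (hG : G.IsHermitian) (k : ℕ) :
    (spectralProjection G (Set.Iio (lam G (n - k)))).rank ≤ k :=
  (rank_spectralProjection hG _).trans_le (card_eigenvalues_lt_lam_le hG k)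

lemma spectralProjection_Iio_lam_eq_zero (hG : G.IsHermitian) :
    spectralProjection G (Set.Iio (lam G n)) = 0 := by
  have hpsd := posSemidef_of_isStarProjection
    (isStarProjection_spectralProjection G (Set.Iio (lam G n)))
  rw [← hpsd.trace_eq_zero_iff, trace_spectralProjection hG, Nat.cast_eq_zero]
  exact Nat.le_zero.1 (card_eigenvalues_lt_lam_le hG 0)

lemma lam_mul_trace_le_mip (hG : G.IsHermitian) (hQ : Q.PosSemidef) :
    lam G n * Q.trace ≤ mip G Q := by
  refine mul_trace_le_trace_mul hG hQ ?_
  rw [spectralProjection_Iio_lam_eq_zero hG, Matrix.zero_mul]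

lemma pos_of_mem_spectra (hXs : Xs ∈ Spectra n) : 0 < n := by
  refine Nat.pos_of_ne_zero ?_
  rintro rfl
  simpa [trace] using hXs.1

lemma mul_eq_lam_smul (hG : G.IsSymm) (hXs : Xs ∈ Spectra n)
    (hopt : ∀ Q ∈ Spectra n, 0 ≤ mip G (Q - Xs)) : G * Xs = lam G n • Xs := by
  have hHerm : G.IsHermitian := isHermitian_iff_isSymm.2 hG
  have hnormal : ∀ Q ∈ Spectra n, mip (-G) (Q - Xs) ≤ 0 := fun Q hQ => by
    simpa [mip] using hopt Q hQ
  have hle : lam G n ≤ mip G Xs := by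
    simpa [hXs.1] using lam_mul_trace_le_mip hHerm hXs.2
  have hge : mip G Xs ≤ lam G n := by
    have hpos : (0 : ℝ) < multMin G := by exact_mod_cast multMin_pos (pos_of_mem_spectra hXs)
    have h := mip_le_mip_mul_trace hnormal
      (posSemidef_of_isStarProjection (isStarProjection_spectralProjection G {lam G n}))
    simp only [mip, Matrix.neg_mul, trace_neg, mul_spectralProjection_singleton hHerm,
      trace_smul, trace_spectralProjection_lam hHerm, smul_eq_mul] at h ⊢
    nlinarith
  have h := mip_smul_one_sub_mul_eq_zero hG.neg hXs hnormal
  rw [show mip (-G) Xs = -lam G n by rw [hle.antisymm hge]; simp [mip]] at h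
  rw [sub_neg_eq_add, neg_smul, Matrix.add_mul, Matrix.neg_mul, Matrix.smul_mul, Matrix.one_mul,
    neg_add_eq_zero] at h
  exact h.symm

lemma mul_spectralProjection_eq_self (hG : G.IsSymm) (hXs : Xs ∈ Spectra n)
    (hopt : ∀ Q ∈ Spectra n, 0 ≤ mip G (Q - Xs)) {s : Set ℝ} (hs : lam G n ∈ s) :
    Xs * spectralProjection G s = Xs := by
  have hleft : spectralProjection G s * Xs = Xs := by
    rw [spectralProjection, cfc_mul_eq_smul_of_mul_eq_smul (isHermitian_iff_isSymm.2 hG) _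
      (mul_eq_lam_smul hG hXs hopt), Set.indicator_of_mem hs, Pi.one_apply, one_smul]
  have hstar := congrArg conjTranspose hleft
  rwa [conjTranspose_mul, hXs.2.isHermitian.eq,
    (isStarProjection_spectralProjection G s).isSelfAdjoint.isHermitian.eq] at hstar

end NormalCone

section RankBound

variable {n : ℕ} {G P Q Z Xs : Mat n} {η : ℝ}

lemma frob_eq_sqrt_trace_of_isStarProjection (hQ : IsStarProjection Q) : frob Q = √Q.trace := by
  have hsymm : Q.IsSymm := isHermitian_iff_isSymm.1 hQ.isSelfAdjoint.isHermitian
  rw [← Real.sqrt_sq (frob_nonneg Q), frob_sq_eq_mip_self hsymm, mip, hQ.isIdempotentElem.eq]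

lemma abs_mip_le_of_isStarProjection {E : Mat n} (hE : E.IsSymm) (hQ : IsStarProjection Q) :
    |mip E Q| ≤ frob E * √Q.trace :=
  frob_eq_sqrt_trace_of_isStarProjection hQ ▸ abs_mip_le hE Q

lemma trace_mul_eq_add_mip_sub (P Xs G Q : Mat n) (η : ℝ) :
    (P * Q).trace = (Xs * Q).trace - η * (G * Q).trace + mip (P - (Xs - η • G)) Q := by
  simp only [mip, Matrix.sub_mul, Matrix.smul_mul, trace_sub, trace_smul, smul_eq_mul]
  ring

lemma isSymm_sub_step (hP : P.IsSymm) (hXs : Xs ∈ Spectra n) (hG : G.IsSymm) :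
    (P - (Xs - η • G)).IsSymm :=
  hP.sub ((isSymm_of_mem_spectra hXs).sub (hG.smul η))

lemma neg_mul_lam_sub_le_multiplier (hG : G.IsSymm) (hXs : Xs ∈ Spectra n)
    (hopt : ∀ Q ∈ Spectra n, 0 ≤ mip G (Q - Xs)) (hP : P.IsSymm) (hZ : Z ∈ Spectra n)
    (hproj : ∀ Q ∈ Spectra n, mip (P - Z) (Q - Z) ≤ 0) :
    -(η * lam G n) - frob (P - (Xs - η • G)) / √(multMin G) ≤ mip (P - Z) Z := by
  have hHerm : G.IsHermitian := isHermitian_iff_isSymm.2 hG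
  have hQ := isStarProjection_spectralProjection G {lam G n}
  have htrace := trace_spectralProjection_lam hHerm
  have hXsQ : (Xs * spectralProjection G {lam G n}).trace = 1 := by
    rw [mul_spectralProjection_eq_self hG hXs hopt (Set.mem_singleton _), hXs.1]
  have hE := (abs_le.1 (abs_mip_le_of_isStarProjection (isSymm_sub_step (η := η) hP hXs hG) hQ)).1
  have hupper := trace_mul_le_of_posSemidef hZ.2
    (posSemidef_mip_smul_one_sub (hP.sub (isSymm_of_mem_spectra hZ)) hproj) hQ
  rw [trace_mul_eq_add_mip_sub P Xs G _ η, hXsQ, mul_spectralProjection_singleton hHerm,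
    trace_smul, smul_eq_mul, htrace, hZ.1] at hupper
  rw [htrace] at hE
  have hpos : (0 : ℝ) < multMin G := by exact_mod_cast multMin_pos (pos_of_mem_spectra hXs)
  refine le_of_mul_le_mul_right ?_ hpos
  calc (-(η * lam G n) - frob (P - (Xs - η • G)) / √(multMin G)) * multMin G
      = -(η * lam G n) * multMin G - frob (P - (Xs - η • G)) * √(multMin G) := by
        rw [sub_mul, div_mul_eq_mul_div, mul_div_assoc, Real.div_sqrt]
    _ ≤ mip (P - Z) Z * multMin G := by linarith

lemma multiplier_lt_neg_mul_lam_add {k s : ℕ} (hG : G.IsSymm) (hXs : Xs ∈ Spectra n)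
    (hopt : ∀ Q ∈ Spectra n, 0 ≤ mip G (Q - Xs)) (hP : P.IsSymm) (hZ : Z ∈ Spectra n)
    (hproj : ∀ Q ∈ Spectra n, mip (P - Z) (Q - Z) ≤ 0) (hη : 0 ≤ η)
    (hgap : lam G n < lam G (n - k)) (hs : 0 < s) (hrank : k + s ≤ Z.rank) :
    mip (P - Z) Z < -(η * lam G (n - k)) + frob (P - (Xs - η • G)) / √s := by
  have hHerm : G.IsHermitian := isHermitian_iff_isSymm.2 hG
  have hR := rank_spectralProjection_Iio_lam_le hHerm k
  obtain ⟨Q, hQ, htrace, hrange, hker⟩ := exists_isStarProjection_range_le_and_mul_eq_zero Z _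
    ((Nat.add_le_add_right hR s).trans hrank)
  have hpos : (0 : ℝ) < s := by exact_mod_cast hs
  have hQ0 : Q ≠ 0 := by
    rintro rfl
    simp only [trace_zero] at htrace
    exact hpos.ne htrace
  have hXsQ : (Xs * Q).trace = 0 := by
    rw [← mul_spectralProjection_eq_self hG hXs hopt (Set.mem_Iio.2 hgap), Matrix.mul_assoc, hker,
      Matrix.mul_zero, trace_zero]
  have hGQ := mul_trace_le_trace_mul hHerm (posSemidef_of_isStarProjection hQ) hker
  have hE := (abs_le.1 (abs_mip_le_of_isStarProjection (isSymm_sub_step (η := η) hP hXs hG) hQ)).2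
  have hlower := lt_trace_mul_of_range_le hZ.2
    (mip_smul_one_sub_mul_eq_zero (hP.sub (isSymm_of_mem_spectra hZ)) hZ hproj) hQ hQ0 hrange
  rw [trace_mul_eq_add_mip_sub P Xs G Q η, hXsQ] at hlower
  rw [htrace] at hGQ hE hlower
  refine lt_of_mul_lt_mul_right ?_ hpos.le
  calc mip (P - Z) Z * s < -(η * lam G (n - k)) * s + frob (P - (Xs - η • G)) * √s := by
        linarith [mul_le_mul_of_nonneg_left hGQ hη]
    _ = (-(η * lam G (n - k)) + frob (P - (Xs - η • G)) / √s) * s := by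
        rw [add_mul, div_mul_eq_mul_div, mul_div_assoc, Real.div_sqrt]

lemma mul_lam_sub_lam_lt_of_lt_rank {k r : ℕ} (hG : G.IsSymm) (hXs : Xs ∈ Spectra n)
    (hopt : ∀ Q ∈ Spectra n, 0 ≤ mip G (Q - Xs)) (hP : P.IsSymm) (hZ : Z ∈ Spectra n)
    (hproj : ∀ Q ∈ Spectra n, mip (P - Z) (Q - Z) ≤ 0) (hη : 0 ≤ η) (hkr : k ≤ r)
    (hgap : lam G n < lam G (n - k)) (hrank : r < Z.rank) :
    η * (lam G (n - k) - lam G n) <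
      frob (P - (Xs - η • G)) * (1 / √(multMin G) + 1 / √(r + 1 - k : ℕ)) := by
  have hlower := neg_mul_lam_sub_le_multiplier (η := η) hG hXs hopt hP hZ hproj
  have hupper := multiplier_lt_neg_mul_lam_add (s := r + 1 - k) hG hXs hopt hP hZ hproj hη hgap
    (by omega) (by omega)
  rw [mul_add, mul_one_div, mul_one_div]
  linarith

/-- The larger of the two spectral gaps of `G` controlling how far from `Xs - η • G`, in units of
`η`, one can move without the projection onto the spectrahedron exceeding rank `r`. When
`r + 1 < 2 * multMin G` the first gap is `0`, so the maximum is the second one. -/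
def gapRadius (G : Mat n) (r : ℕ) : ℝ :=
  max (√(multMin G) * (lam G (n - (r - multMin G + 1)) - lam G n) / 2)
    ((lam G (n - r) - lam G n) / (1 + 1 / √(multMin G)))

lemma gapRadius_nonneg {r : ℕ} (hG : G.IsSymm) (hr : r < n) : 0 ≤ gapRadius G r := by
  refine le_max_of_le_right (div_nonneg (sub_nonneg.2 ?_) (by positivity))
  exact lam_le_lam (isHermitian_iff_isSymm.2 hG) hr r.zero_le

lemma rank_mproj_spectra_le {r : ℕ} (hG : G.IsSymm) (hXs : Xs ∈ Spectra n)
    (hopt : ∀ Q ∈ Spectra n, 0 ≤ mip G (Q - Xs)) (hP : P.IsSymm) (hη : 0 ≤ η)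
    (hmult : multMin G ≤ r) (hr : r < n)
    (hdist : frob (P - (Xs - η • G)) ≤ η * gapRadius G r) :
    (mproj (Spectra n) P).rank ≤ r := by
  obtain ⟨hZ, hproj⟩ := mproj_spectra_spec ⟨Xs, hXs⟩ hP
  by_contra! hrank
  have hmultpos : 0 < multMin G := multMin_pos (pos_of_mem_spectra hXs)
  have hsqrt : 0 < √(multMin G : ℝ) := Real.sqrt_pos.2 (by exact_mod_cast hmultpos)
  have hgap := lam_lt_lam_sub_of_multMin_le (isHermitian_iff_isSymm.2 hG) hr hmult
  have hsecond : 0 < (lam G (n - r) - lam G n) / (1 + 1 / √(multMin G)) :=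
    div_pos (sub_pos.2 hgap) (by positivity)
  rcases max_cases (√(multMin G) * (lam G (n - (r - multMin G + 1)) - lam G n) / 2)
    ((lam G (n - r) - lam G n) / (1 + 1 / √(multMin G))) with ⟨hmax, hle⟩ | ⟨hmax, -⟩
  all_goals rw [gapRadius, hmax] at hdist
  · have hfirst : lam G n < lam G (n - (r - multMin G + 1)) := by
      have := hsecond.trans_le hle
      exact sub_pos.1 (pos_of_mul_pos_right (by linarith) hsqrt.le)
    have hlt := mul_lam_sub_lam_lt_of_lt_rank hG hXs hopt hP hZ hproj hη (by omega) hfirst hrank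
    rw [show r + 1 - (r - multMin G + 1) = multMin G by omega] at hlt
    refine hlt.not_ge ((mul_le_mul_of_nonneg_right hdist (by positivity)).trans_eq ?_)
    field_simp
    norm_num
  · have hlt := mul_lam_sub_lam_lt_of_lt_rank hG hXs hopt hP hZ hproj hη le_rfl hgap hrank
    rw [Nat.add_sub_cancel_left, Nat.cast_one, Real.sqrt_one, one_div_one, add_comm] at hlt
    refine hlt.not_ge ((mul_le_mul_of_nonneg_right hdist (by positivity)).trans_eq ?_)
    field_simp

lemma rank_mproj_spectra_sub_smul_le {X H : Mat n} {r : ℕ} {c d : ℝ} (hG : G.IsSymm)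
    (hXs : Xs ∈ Spectra n) (hopt : ∀ Q ∈ Spectra n, 0 ≤ mip G (Q - Xs)) (hX : X.IsSymm)
    (hH : H.IsSymm) (hη : 0 ≤ η) (hmult : multMin G ≤ r) (hr : r < n) (hc : 0 ≤ c)
    (hXd : frob (X - Xs) ≤ d) (hHd : frob (H - G) ≤ c * d)
    (hd : d ≤ η / (1 + η * c) * gapRadius G r) :
    (mproj (Spectra n) (X - η • H)).rank ≤ r := by
  refine rank_mproj_spectra_le hG hXs hopt (hX.sub (hH.smul η)) hη hmult hr ?_
  calc frob (X - η • H - (Xs - η • G)) = frob (X - Xs - η • (H - G)) := by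
        congr 1
        module
    _ ≤ d + η * (c * d) := (frob_sub_smul_le hη _ _).trans (by gcongr)
    _ = (1 + η * c) * d := by ring
    _ ≤ (1 + η * c) * (η / (1 + η * c) * gapRadius G r) := by gcongr
    _ = η * gapRadius G r := by
        rw [← mul_assoc, mul_div_cancel₀ _ (by positivity : (1 + η * c) ≠ 0)]

end RankBound

section ProjectedStep

variable {n m : ℕ} {K : Set (Vec m)} {A X Xs G Gs : Mat n} {w ys gs : Vec m} {η : ℝ}

lemma vproj_spec (hne : K.Nonempty) (hclosed : IsClosed K) (hconvex : Convex ℝ K) (x : Vec m) :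
    vproj K x ∈ K ∧ ∀ q ∈ K, ⟪x - vproj K x, q - vproj K x⟫ ≤ 0 := by
  obtain ⟨hmem, hmin⟩ : vproj K x ∈ K ∧ ∀ q ∈ K, ‖x - vproj K x‖ ≤ ‖x - q‖ :=
    Classical.epsilon_spec (exists_mem_forall_norm_sub_le hne hclosed.isComplete hconvex x)
  exact ⟨hmem, inner_sub_sub_nonpos_of_forall_norm_sub_le hconvex hmem hmin⟩

lemma inner_nonpos_of_forall_le_of_gradient_inequality {φ : Vec m → ℝ} {g : Vec m → Vec m} {L : ℝ}
    (hconvex : Convex ℝ K) (hys : ys ∈ K) (hmax : ∀ q ∈ K, φ q ≤ φ ys)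
    (hgrad : ∀ q ∈ K, φ ys ≤ φ q + ⟪g q, ys - q⟫)
    (hLip : ∀ y ∈ K, ∀ y' ∈ K, ‖g y - g y'‖ ≤ L * ‖y - y'‖) :
    ∀ q ∈ K, ⟪g ys, q - ys⟫ ≤ 0 := by
  intro q hq
  simp only [← dist_eq_norm] at hLip
  have hcont : ContinuousWithinAt (-g) K ys :=
    ((LipschitzOnWith.of_dist_le' hLip).continuousOn ys hys).neg
  have h := inner_nonneg_of_forall_le_of_gradient_inequality (φ := -φ) hconvex hys
    (fun q hq => neg_le_neg (hmax q hq))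
    (fun q hq => by
      rw [Pi.neg_apply, Pi.neg_apply, Pi.neg_apply, inner_neg_left, ← neg_add]
      exact neg_le_neg (hgrad q hq)) hcont q hq
  rwa [Pi.neg_apply, inner_neg_left, Left.nonneg_neg_iff] at h

lemma norm_vproj_sub_le (hη : 0 ≤ η) (hclosed : IsClosed K) (hconvex : Convex ℝ K)
    (hys : ys ∈ K) (hopt : ∀ q ∈ K, ⟪gs, q - ys⟫ ≤ 0) (y g : Vec m) :
    ‖vproj K (y + η • g) - ys‖ ≤ ‖y - ys - η • (gs - g)‖ := by
  obtain ⟨hmem, hproj⟩ := vproj_spec ⟨ys, hys⟩ hclosed hconvex (y + η • g)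
  have hstep : ⟪y - η • (-g) - vproj K (y + η • g), ys - vproj K (y + η • g)⟫ ≤ 0 := by
    simpa using hproj ys hys
  have hys' : 0 ≤ ⟪-gs, vproj K (y + η • g) - ys⟫ := by simpa using hopt _ hmem
  simpa [neg_add_eq_sub] using norm_sub_le_of_projected_step hη hstep hys'

lemma frob_mproj_spectra_sub_le (hη : 0 ≤ η) (hX : X.IsSymm) (hG : G.IsSymm) (hGs : Gs.IsSymm)
    (hXs : Xs ∈ Spectra n) (hopt : ∀ Q ∈ Spectra n, 0 ≤ mip Gs (Q - Xs)) :
    frob (mproj (Spectra n) (X - η • G) - Xs) ≤ frob (X - Xs - η • (G - Gs)) := by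
  have hsymm : (X - η • G).IsSymm := hX.sub (hG.smul η)
  obtain ⟨hmem, hproj⟩ := mproj_spectra_spec ⟨Xs, hXs⟩ hsymm
  exact frob_sub_le_of_projected_step hη (hsymm.sub (isSymm_of_mem_spectra hmem)) hGs
    (hproj Xs hXs) (hopt _ hmem)

lemma pnorm_projected_step_sub_le (hη : 0 ≤ η) (hclosed : IsClosed K) (hconvex : Convex ℝ K)
    (hX : X.IsSymm) (hG : G.IsSymm) (hGs : Gs.IsSymm) (hXs : Xs ∈ Spectra n) (hys : ys ∈ K)
    (hoptX : ∀ Q ∈ Spectra n, 0 ≤ mip Gs (Q - Xs)) (hopty : ∀ q ∈ K, ⟪gs, q - ys⟫ ≤ 0)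
    (y g : Vec m) :
    pnorm (mproj (Spectra n) (X - η • G) - Xs) (vproj K (y + η • g) - ys) ≤
      pnorm (X - Xs) (y - ys) + η * pnorm (G - Gs) (g - gs) :=
  calc _ ≤ pnorm (X - Xs - η • (G - Gs)) (y - ys - η • (gs - g)) := by
        have hXstep := frob_mproj_spectra_sub_le hη hX hG hGs hXs hoptX
        have hystep := norm_vproj_sub_le hη hclosed hconvex hys hopty y g
        have := frob_nonneg (mproj (Spectra n) (X - η • G) - Xs)
        rw [pnorm, pnorm]
        gcongr
    _ ≤ pnorm (X - Xs) (y - ys) + η * pnorm (G - Gs) (gs - g) := pnorm_sub_smul_le hη _ _ _ _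
    _ = _ := by rw [pnorm, pnorm, pnorm, norm_sub_rev gs]

lemma frob_le_pnorm (A : Mat n) (y : Vec m) : frob A ≤ pnorm A y :=
  Real.le_sqrt_of_sq_le (le_add_of_nonneg_right (sq_nonneg _))

lemma frob_add_norm_le_sqrt_two_mul_pnorm (A : Mat n) (y : Vec m) :
    frob A + ‖y‖ ≤ √2 * pnorm A y := by
  rw [pnorm, ← Real.sqrt_mul zero_le_two]
  exact Real.le_sqrt_of_sq_le add_sq_le

lemma frob_sub_le_sqrt_two_mul_max_mul_pnorm {gX : Mat n → Vec m → Mat n} {βX βXy : ℝ}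
    (hLX : ∀ X ∈ Spectra n, ∀ X' ∈ Spectra n, ∀ y ∈ K,
      frob (gX X y - gX X' y) ≤ βX * frob (X - X'))
    (hLXy : ∀ X ∈ Spectra n, ∀ y ∈ K, ∀ y' ∈ K, frob (gX X y - gX X y') ≤ βXy * ‖y - y'‖)
    (hβX : 0 ≤ βX) (hA : A ∈ Spectra n) (hw : w ∈ K) (hXs : Xs ∈ Spectra n) (hys : ys ∈ K) :
    frob (gX A w - gX Xs ys) ≤ √2 * max βX βXy * pnorm (A - Xs) (w - ys) :=
  calc frob (gX A w - gX Xs ys)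
      = frob ((gX A w - gX Xs w) + (gX Xs w - gX Xs ys)) := by rw [sub_add_sub_cancel]
    _ ≤ βX * frob (A - Xs) + βXy * ‖w - ys‖ :=
        (frob_add_le _ _).trans (add_le_add (hLX A hA Xs hXs w hw) (hLXy Xs hXs w hw ys hys))
    _ ≤ max βX βXy * frob (A - Xs) + max βX βXy * ‖w - ys‖ := by
        gcongr
        · exact frob_nonneg _
        · exact le_max_left _ _
        · exact le_max_right _ _
    _ = max βX βXy * (frob (A - Xs) + ‖w - ys‖) := by ring
    _ ≤ max βX βXy * (√2 * pnorm (A - Xs) (w - ys)) :=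
        mul_le_mul_of_nonneg_left (frob_add_norm_le_sqrt_two_mul_pnorm _ _)
          (hβX.trans (le_max_left _ _))
    _ = √2 * max βX βXy * pnorm (A - Xs) (w - ys) := by ring

end ProjectedStep

lemma le_one_div_sqrt_one_sub_sq {t : ℝ} (ht : 0 ≤ t) (ht1 : t < 1) : t ≤ 1 / √(1 - t ^ 2) := by
  have hpos : 0 < √(1 - t ^ 2) := Real.sqrt_pos.2 (by nlinarith)
  have hle : √(1 - t ^ 2) ≤ 1 := Real.sqrt_le_one.2 (by nlinarith)
  exact ht1.le.trans ((one_le_div hpos).2 hle)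

lemma div_one_add_mul_one_div_sqrt_le {η β c : ℝ} (hη : 0 ≤ η) (hβ : 0 ≤ β) (hηβ : η * β < 1)
    (hc : 0 ≤ c) :
    η / (1 + c * (1 + 1 / √(1 - η ^ 2 * β ^ 2))) ≤ η / (1 + c * (1 + η * β)) := by
  have := le_one_div_sqrt_one_sub_sq (mul_nonneg hη hβ) hηβ
  rw [← mul_pow]
  gcongr

theorem stmt_12_general {n m : ℕ} {K : Set (Vec m)} (hKclosed : IsClosed K) (hKconvex : Convex ℝ K)
    {gX : Mat n → Vec m → Mat n} {gY : Mat n → Vec m → Vec m} {Xs : Mat n} {ys : Vec m}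
    {βX βXy β η : ℝ} (hsymm : ∀ X ∈ Spectra n, ∀ y ∈ K, (gX X y).IsSymm)
    (hXs : Xs ∈ Spectra n) (hys : ys ∈ K)
    (hoptX : ∀ Q ∈ Spectra n, 0 ≤ mip (gX Xs ys) (Q - Xs))
    (hopty : ∀ q ∈ K, ⟪gY Xs ys, q - ys⟫ ≤ 0)
    (hβX : 0 ≤ βX) (hβ : 0 ≤ β) (hη : 0 ≤ η)
    (hLX : ∀ X ∈ Spectra n, ∀ X' ∈ Spectra n, ∀ y ∈ K,
      frob (gX X y - gX X' y) ≤ βX * frob (X - X'))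
    (hLXy : ∀ X ∈ Spectra n, ∀ y ∈ K, ∀ y' ∈ K, frob (gX X y - gX X y') ≤ βXy * ‖y - y'‖)
    (hLip : ∀ X ∈ Spectra n, ∀ X' ∈ Spectra n, ∀ y ∈ K, ∀ y' ∈ K,
      pnorm (gX X y - gX X' y') (gY X y - gY X' y') ≤ β * pnorm (X - X') (y - y'))
    {r : ℕ} (hmult : multMin (gX Xs ys) ≤ r) (hr : r < n)
    {X : Mat n} (hX : X ∈ Spectra n) {y : Vec m} (hy : y ∈ K)
    (hdist : pnorm (X - Xs) (y - ys) ≤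
      η / (1 + √2 * η * max βX βXy * (1 + η * β)) * gapRadius (gX Xs ys) r) :
    (mproj (Spectra n) (X - η • gX X y)).rank ≤ r ∧
      (mproj (Spectra n)
        (X - η • gX (mproj (Spectra n) (X - η • gX X y)) (vproj K (y + η • gY X y)))).rank ≤ r := by
  have hXsymm := isSymm_of_mem_spectra hX
  have hrank : ∀ A ∈ Spectra n, ∀ w ∈ K,
      pnorm (A - Xs) (w - ys) ≤ (1 + η * β) * pnorm (X - Xs) (y - ys) →
      (mproj (Spectra n) (X - η • gX A w)).rank ≤ r := by
    intro A hA w hw hAw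
    refine rank_mproj_spectra_sub_smul_le (c := √2 * max βX βXy * (1 + η * β))
      (hsymm Xs hXs ys hys) hXs hoptX hXsymm (hsymm A hA w hw) hη hmult hr (by positivity)
      (frob_le_pnorm _ (y - ys)) ?_ ?_
    · calc _ ≤ √2 * max βX βXy * pnorm (A - Xs) (w - ys) :=
            frob_sub_le_sqrt_two_mul_max_mul_pnorm hLX hLXy hβX hA hw hXs hys
        _ ≤ √2 * max βX βXy * (1 + η * β) * pnorm (X - Xs) (y - ys) := by
            rw [mul_assoc _ (1 + η * β)]
            gcongr
    · convert hdist using 3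
      ring
  have hZ := (mproj_spectra_spec ⟨Xs, hXs⟩ (hXsymm.sub ((hsymm X hX y hy).smul η))).1
  have hw := (vproj_spec ⟨ys, hys⟩ hKclosed hKconvex (y + η • gY X y)).1
  refine ⟨hrank X hX y hy ?_, hrank _ hZ _ hw ?_⟩
  · exact le_mul_of_one_le_left (Real.sqrt_nonneg _) (by nlinarith)
  · calc _ ≤ pnorm (X - Xs) (y - ys) + η * pnorm (gX X y - gX Xs ys) (gY X y - gY Xs ys) :=
          pnorm_projected_step_sub_le hη hKclosed hKconvex hXsymm (hsymm X hX y hy)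
            (hsymm Xs hXs ys hys) hXs hys hoptX hopty y (gY X y)
      _ ≤ pnorm (X - Xs) (y - ys) + η * (β * pnorm (X - Xs) (y - ys)) := by
          gcongr
          exact hLip X hX Xs hXs y hy ys hys
      _ = (1 + η * β) * pnorm (X - Xs) (y - ys) := by ring

theorem stmt_12 {n m : ℕ} (hn : 2 ≤ n)
    (K : Set (Vec m)) (hKne : K.Nonempty) (hKcp : IsCompact K) (hKcv : Convex ℝ K)
    (f : Mat n → Vec m → ℝ)
    (gX : Mat n → Vec m → Mat n) (gY : Mat n → Vec m → Vec m)
    (hgXs : ∀ X y, (gX X y).IsSymm)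
    (hconv : ∀ y ∈ K, ∀ X ∈ SymM n, ∀ X' ∈ SymM n,
      f X' y ≥ f X y + mip (gX X y) (X' - X))
    (hconc : ∀ X ∈ Spectra n, ∀ y y' : Vec m,
      f X y' ≤ f X y + ⟪gY X y, y' - y⟫)
    (Xs : Mat n) (ys : Vec m) (hXsS : Xs ∈ Spectra n) (hysK : ys ∈ K)
    (hsaddle : ∀ X ∈ Spectra n, ∀ y ∈ K, f Xs y ≤ f Xs ys ∧ f Xs ys ≤ f X ys)
    (rt : ℕ) (hrt : rt = multMin (gX Xs ys))
    (βX βy βXy βyX : ℝ) (hβX0 : 0 ≤ βX) (hβy0 : 0 ≤ βy) (hβXy0 : 0 ≤ βXy) (hβyX0 : 0 ≤ βyX)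
    (hLX : ∀ X ∈ Spectra n, ∀ X' ∈ Spectra n, ∀ y ∈ K,
      frob (gX X y - gX X' y) ≤ βX * frob (X - X'))
    (hLy : ∀ X ∈ Spectra n, ∀ y ∈ K, ∀ y' ∈ K,
      ‖gY X y - gY X y'‖ ≤ βy * ‖y - y'‖)
    (hLXy : ∀ X ∈ Spectra n, ∀ y ∈ K, ∀ y' ∈ K,
      frob (gX X y - gX X y') ≤ βXy * ‖y - y'‖)
    (hLyX : ∀ X ∈ Spectra n, ∀ X' ∈ Spectra n, ∀ y ∈ K,
      ‖gY X y - gY X' y‖ ≤ βyX * frob (X - X'))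
    (β : ℝ) (hβ : 0 < β)
    (hLip : ∀ X ∈ Spectra n, ∀ X' ∈ Spectra n, ∀ y ∈ K, ∀ y' ∈ K,
      pnorm (gX X y - gX X' y') (gY X y - gY X' y') ≤ β * pnorm (X - X') (y - y'))
    (η : ℝ) (hη0 : 0 ≤ η) (hηβ : η * β < 1) :
    ∀ r : ℕ, rt ≤ r → r ≤ n - 1 →
      ∀ X ∈ Spectra n, ∀ y ∈ K,
        pnorm (X - Xs) (y - ys) ≤
          η / (1 + Real.sqrt 2 * η * max βX βXy * (1 + 1 / Real.sqrt (1 - η ^ 2 * β ^ 2))) *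
            max (Real.sqrt (rt : ℝ) * (lam (gX Xs ys) (n - (r - rt + 1)) - lam (gX Xs ys) n) / 2)
                ((lam (gX Xs ys) (n - r) - lam (gX Xs ys) n) / (1 + 1 / Real.sqrt (rt : ℝ))) →
        (mproj (Spectra n) (X - η • gX X y)).rank ≤ r ∧
        (mproj (Spectra n)
          (X - η • gX (mproj (Spectra n) (X - η • gX X y)) (vproj K (y + η • gY X y)))).rank ≤ r := by
  subst hrt
  intro r hmult hr X hX y hy hdist
  have hoptX : ∀ Q ∈ Spectra n, 0 ≤ mip (gX Xs ys) (Q - Xs) :=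
    mip_nonneg_of_forall_le_of_gradient_inequality (φ := (f · ys)) hXsS
      (fun Q hQ => (hsaddle Q hQ ys hysK).2) (fun Q _ => hgXs Q ys)
      (fun Q hQ => hconv ys hysK Q (isSymm_of_mem_spectra hQ) Xs (isSymm_of_mem_spectra hXsS))
      (fun Q hQ R hR => hLX Q hQ R hR ys hysK)
  have hopty : ∀ q ∈ K, ⟪gY Xs ys, q - ys⟫ ≤ 0 :=
    inner_nonpos_of_forall_le_of_gradient_inequality (φ := f Xs) hKcv hysK
      (fun q hq => (hsaddle Xs hXsS q hq).1) (fun q _ => hconc Xs hXsS q ys) (hLy Xs hXsS)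
  refine stmt_12_general hKcp.isClosed hKcv (fun X _ y _ => hgXs X y) hXsS hysK hoptX hopty hβX0
    hβ.le hη0 hLX hLXy hLip hmult (by omega) hX hy (hdist.trans ?_)
  exact mul_le_mul_of_nonneg_right
    (div_one_add_mul_one_div_sqrt_le hη0 hβ.le hηβ (by positivity))
    (gapRadius_nonneg (hgXs Xs ys) (by omega))
end
end

section
/- Let g : 𝕊ⁿ → ℝ be convex, let X* be a minimizer of g over S_n with rank(X*) = r*, and let G* ∈ ∂g(X*) satisfy ⟨X − X*, G*⟩ ≥ 0 for all X ∈ S_n. For any η ≥ 0, the eigenvalues of P* = X* − η·G* (in nonincreasing order) are: λ_i(P*) = λ_i(X*) − η·λ_n(G*) for 1 ≤ i ≤ r*, and λ_i(P*) = −η·λ_{n−i+1}(G*) for r* < i ≤ n. In particular, if r̃ denotes the multiplicity of λ_n(G*), then Σ_{i=1}^{r̃} λ_i(P*) = 1 − η·r̃·λ_n(G*). -/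
open scoped BigOperators RealInnerProductSpace
open Matrix

noncomputable section

/-!
Testing the first-order condition against a unit eigenvector of `μ = λₙ(G*)` shows that
`H = G* - μ I ⪰ 0` satisfies `Tr(X* H) ≤ 0`, hence `X* H = 0`. If `A B = 0` then
`(t - A)(t - B) = t (t - (A + B))`, so the nonzero eigenvalues of `A + B` are those of `A` together
with those of `B`; with `A = X*` and `B = -η H` the eigenvalues of `A` are nonnegative, those of `B`
nonpositive, and `rank A + rank B ≤ n` keeps the two sorted lists from overlapping. Adding
`-η μ I` shifts the spectrum of `X* - η H` to that of `P*`.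
-/

open Polynomial in
theorem charpoly_mul_charpoly_of_mul_eq_zero {ι R : Type*} [Fintype ι] [DecidableEq ι]
    [CommRing R] {A B : Matrix ι ι R} (hAB : A * B = 0) :
    A.charpoly * B.charpoly = X ^ Fintype.card ι * (A + B).charpoly := by
  have hmap : C.mapMatrix A * C.mapMatrix B = 0 := by rw [← map_mul, hAB, map_zero]
  have hchar : charmatrix A * charmatrix B = (X : R[X]) • charmatrix (A + B) := by
    simp only [charmatrix, scalar_apply, ← smul_one_eq_diagonal, sub_mul, mul_sub, hmap, map_add,
      smul_mul_assoc, mul_smul_comm, one_mul, mul_one]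
    module
  rw [Matrix.charpoly, Matrix.charpoly, ← det_mul, hchar, det_smul, Matrix.charpoly]

theorem antitone_eq_of_univ_val_map_eq {α : Type*} [PartialOrder α] {n : ℕ} {f g : Fin n → α}
    (hf : Antitone f) (hg : Antitone g)
    (h : Finset.univ.val.map f = Finset.univ.val.map g) : f = g := by
  rw [Fin.univ_val_map, Fin.univ_val_map, Multiset.coe_eq_coe] at h
  exact List.ofFn_injective
    (h.eq_of_pairwise' hf.sortedGE_ofFn.pairwise hg.sortedGE_ofFn.pairwise)

open Polynomial in
theorem univ_val_map_eq_of_prod_X_sub_C_eq {ι R : Type*} [Fintype ι] [CommRing R] [IsDomain R]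
    {f g : ι → R} (h : ∏ i, (X - C (f i)) = ∏ i, (X - C (g i))) :
    Finset.univ.val.map f = Finset.univ.val.map g := by
  have hroots (u : ι → R) : (∏ i, (X - C (u i))).roots = Finset.univ.val.map u := by
    rw [← roots_multiset_prod_X_sub_C (Finset.univ.val.map u), Multiset.map_map]
    rfl
  rw [← hroots f, h, hroots g]

open scoped MatrixOrder ComplexOrder Matrix.Norms.L2Operator in
theorem mul_eq_zero_of_trace_mul_nonpos {ι 𝕜 : Type*} [Fintype ι] [RCLike 𝕜] {A B : Matrix ι ι 𝕜}
    (hA : A.PosSemidef) (hB : B.PosSemidef) (h : (A * B).trace ≤ 0) : A * B = 0 := by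
  classical
  obtain ⟨C, rfl⟩ := CStarAlgebra.nonneg_iff_eq_star_mul_self.1 hA.nonneg
  obtain ⟨D, rfl⟩ := CStarAlgebra.nonneg_iff_eq_star_mul_self.1 hB.nonneg
  simp only [star_eq_conjTranspose] at h ⊢
  have htrace : (Cᴴ * C * (Dᴴ * D)).trace = ((C * Dᴴ) * (C * Dᴴ)ᴴ).trace := by
    rw [conjTranspose_mul, conjTranspose_conjTranspose, Matrix.mul_assoc, trace_mul_comm]
    simp only [Matrix.mul_assoc]
  have hCD : C * Dᴴ = 0 := trace_mul_conjTranspose_self_eq_zero_iff.1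
    (le_antisymm (htrace ▸ h) (posSemidef_self_mul_conjTranspose (C * Dᴴ)).trace_nonneg)
  rw [Matrix.mul_assoc, ← Matrix.mul_assoc C, hCD, Matrix.zero_mul, Matrix.mul_zero]

/-- The eigenvalues of a symmetric matrix in nonincreasing order, indexed from zero by `Fin n`;
`lam` lists the same values from one. -/
def sortedEigenvalues {n : ℕ} (A : Mat n) (i : Fin n) : ℝ := lam A (i + 1)

section SortedEigenvalues

variable {n : ℕ} {A B : Mat n}

theorem lam_eq_sortedEigenvalues (A : Mat n) {i : ℕ} (hi : 1 ≤ i) (hin : i ≤ n) :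
    lam A i = sortedEigenvalues A ⟨i - 1, by lia⟩ := by
  rw [sortedEigenvalues, Nat.sub_add_cancel hi]

theorem lam_sub_add_one_eq_sortedEigenvalues_rev (A : Mat n) {i : ℕ} (hi : 1 ≤ i) (hin : i ≤ n) :
    lam A (n - i + 1) = sortedEigenvalues A (Fin.rev ⟨i - 1, by lia⟩) := by
  rw [sortedEigenvalues, Fin.val_rev, Nat.sub_add_cancel hi]

theorem sortedEigenvalues_eq_eigenvalues_sort (hA : A.IsHermitian) (i : Fin n) :
    sortedEigenvalues A i = hA.eigenvalues (Tuple.sort hA.eigenvalues i.rev) := by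
  rw [sortedEigenvalues, lam, dif_pos (show (i : ℕ) + 1 - 1 < n from i.2), dif_pos hA]
  rfl

theorem sortedEigenvalues_antitone (hA : A.IsHermitian) : Antitone (sortedEigenvalues A) := by
  intro i j hij
  rw [sortedEigenvalues_eq_eigenvalues_sort hA, sortedEigenvalues_eq_eigenvalues_sort hA]
  exact Tuple.monotone_sort hA.eigenvalues (Fin.rev_le_rev.2 hij)

theorem exists_perm_sortedEigenvalues_eq (hA : A.IsHermitian) :
    ∃ σ : Equiv.Perm (Fin n), ∀ i, sortedEigenvalues A i = hA.eigenvalues (σ i) :=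
  ⟨Fin.revPerm.trans (Tuple.sort hA.eigenvalues), sortedEigenvalues_eq_eigenvalues_sort hA⟩

theorem lam_le_sortedEigenvalues (hA : A.IsHermitian) (i : Fin n) :
    lam A n ≤ sortedEigenvalues A i := by
  rw [lam_eq_sortedEigenvalues A i.pos le_rfl]
  exact sortedEigenvalues_antitone hA (Fin.le_def.2 (by grind))

theorem trace_eq_sum_sortedEigenvalues (hA : A.IsHermitian) :
    A.trace = ∑ i, sortedEigenvalues A i := by
  obtain ⟨σ, hσ⟩ := exists_perm_sortedEigenvalues_eq hA
  simp only [hA.trace_eq_sum_eigenvalues, hσ, Equiv.sum_comp σ, RCLike.ofReal_real_eq_id, id]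

theorem trace_eq_sum_lam (hA : A.IsHermitian) : A.trace = ∑ i ∈ Finset.Icc 1 n, lam A i := by
  calc A.trace = ∑ i : Fin n, lam A (i + 1) := trace_eq_sum_sortedEigenvalues hA
    _ = ∑ i ∈ Finset.Ico 0 n, lam A (i + 1) := by
      rw [Fin.sum_univ_eq_sum_range fun i => lam A (i + 1), Finset.range_eq_Ico]
    _ = ∑ i ∈ Finset.Icc 1 n, lam A i := Finset.sum_Ico_add' _ 0 n 1

theorem posSemidef_iff_sortedEigenvalues_nonneg (hA : A.IsHermitian) :
    A.PosSemidef ↔ ∀ i, 0 ≤ sortedEigenvalues A i := by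
  obtain ⟨σ, hσ⟩ := exists_perm_sortedEigenvalues_eq hA
  simp only [hA.posSemidef_iff_eigenvalues_nonneg, Pi.le_def, Pi.zero_apply, hσ,
    σ.forall_congr_left (p := fun i => 0 ≤ hA.eigenvalues (σ i)), Equiv.apply_symm_apply]

theorem rank_eq_card_sortedEigenvalues_ne_zero (hA : A.IsHermitian) :
    A.rank = (Finset.univ.filter fun i => sortedEigenvalues A i ≠ 0).card := by
  obtain ⟨σ, hσ⟩ := exists_perm_sortedEigenvalues_eq hA
  rw [hA.rank_eq_card_non_zero_eigs, ← Fintype.card_subtype]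
  exact (Fintype.card_congr (σ.subtypeEquiv fun i => by rw [hσ])).symm

theorem sortedEigenvalues_eq_zero_of_rank_le (hA : A.PosSemidef) {i : Fin n} (hi : A.rank ≤ i) :
    sortedEigenvalues A i = 0 := by
  have hnonneg := (posSemidef_iff_sortedEigenvalues_nonneg hA.1).1 hA
  have hcard := Tuple.lt_card_gt_iff_apply_gt_of_antitone (sortedEigenvalues_antitone hA.1)
    (j := i) (a := 0)
  simp only [(hnonneg _).lt_iff_ne', ← rank_eq_card_sortedEigenvalues_ne_zero hA.1] at hcard
  exact not_not.1 (mt hcard.2 hi.not_gt)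

theorem lam_eq_zero_of_rank_lt (hA : A.PosSemidef) {i : ℕ} (hi : A.rank < i) (hin : i ≤ n) :
    lam A i = 0 := by
  rw [lam_eq_sortedEigenvalues A (by lia) hin]
  exact sortedEigenvalues_eq_zero_of_rank_le hA (by grind)

theorem sum_lam_Icc_eq_trace_of_rank_le (hA : A.PosSemidef) {m : ℕ} (hm : A.rank ≤ m)
    (hmn : m ≤ n) : ∑ i ∈ Finset.Icc 1 m, lam A i = A.trace := by
  rw [trace_eq_sum_lam hA.1]
  refine Finset.sum_subset (Finset.Icc_subset_Icc_right hmn) fun i hin him => ?_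
  exact lam_eq_zero_of_rank_lt hA (by grind) (by grind)

open Polynomial in
theorem charpoly_cfc_eq_prod_sortedEigenvalues (hA : A.IsHermitian) (f : ℝ → ℝ) :
    (cfc f A).charpoly = ∏ i, (X - C (f (sortedEigenvalues A i))) := by
  obtain ⟨σ, hσ⟩ := exists_perm_sortedEigenvalues_eq hA
  simp only [hA.charpoly_cfc_eq, hσ, RCLike.ofReal_real_eq_id, id]
  exact (Equiv.prod_comp σ fun i => X - C (f (hA.eigenvalues i))).symm

open Polynomial in
theorem charpoly_eq_prod_sortedEigenvalues (hA : A.IsHermitian) :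
    A.charpoly = ∏ i, (X - C (sortedEigenvalues A i)) := by
  simpa only [cfc_id ℝ A hA.isSelfAdjoint, id] using charpoly_cfc_eq_prod_sortedEigenvalues hA id

open Polynomial in
theorem sortedEigenvalues_eq_of_charpoly_eq (hA : A.IsHermitian) {f : Fin n → ℝ}
    (hf : Antitone f) (h : A.charpoly = ∏ i, (X - C (f i))) : sortedEigenvalues A = f :=
  antitone_eq_of_univ_val_map_eq (sortedEigenvalues_antitone hA) hf
    (univ_val_map_eq_of_prod_X_sub_C_eq (charpoly_eq_prod_sortedEigenvalues hA ▸ h))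

theorem sortedEigenvalues_cfc_of_monotone (hA : A.IsHermitian) {f : ℝ → ℝ} (hf : Monotone f)
    (i : Fin n) : sortedEigenvalues (cfc f A) i = f (sortedEigenvalues A i) :=
  congrFun (sortedEigenvalues_eq_of_charpoly_eq (cfc_predicate f A)
    (hf.comp_antitone (sortedEigenvalues_antitone hA))
    (charpoly_cfc_eq_prod_sortedEigenvalues hA f)) i

open Polynomial in
theorem sortedEigenvalues_cfc_of_antitone (hA : A.IsHermitian) {f : ℝ → ℝ} (hf : Antitone f)
    (i : Fin n) : sortedEigenvalues (cfc f A) i = f (sortedEigenvalues A i.rev) := by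
  have hanti : Antitone fun i : Fin n => f (sortedEigenvalues A i.rev) := fun _ _ hij =>
    hf (sortedEigenvalues_antitone hA (Fin.rev_le_rev.2 hij))
  refine congrFun (sortedEigenvalues_eq_of_charpoly_eq (cfc_predicate f A) hanti ?_) i
  rw [charpoly_cfc_eq_prod_sortedEigenvalues hA]
  exact (Equiv.prod_comp Fin.revPerm fun i => X - C (f (sortedEigenvalues A i))).symm

theorem sortedEigenvalues_neg (hA : A.IsHermitian) (i : Fin n) :
    sortedEigenvalues (-A) i = -sortedEigenvalues A i.rev := by
  rw [← cfc_neg_id (R := ℝ) A hA.isSelfAdjoint,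
    sortedEigenvalues_cfc_of_antitone hA fun _ _ => neg_le_neg]

theorem sortedEigenvalues_smul (hA : A.IsHermitian) {c : ℝ} (hc : 0 ≤ c) (i : Fin n) :
    sortedEigenvalues (c • A) i = c * sortedEigenvalues A i := by
  rw [← cfc_const_mul_id c A hA.isSelfAdjoint,
    sortedEigenvalues_cfc_of_monotone hA fun _ _ h => mul_le_mul_of_nonneg_left h hc]

theorem sortedEigenvalues_sub_smul_one (hA : A.IsHermitian) (c : ℝ) (i : Fin n) :
    sortedEigenvalues (A - c • (1 : Mat n)) i = sortedEigenvalues A i - c := by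
  have hcfc : cfc (fun x => x - c) A = A - c • (1 : Mat n) := by
    rw [cfc_sub .., cfc_id' ℝ A hA.isSelfAdjoint, cfc_const c A hA.isSelfAdjoint,
      Algebra.algebraMap_eq_smul_one]
  rw [← hcfc, sortedEigenvalues_cfc_of_monotone hA fun _ _ h => sub_le_sub_right h c]

theorem posSemidef_sub_lam_smul_one (hA : A.IsHermitian) :
    (A - lam A n • (1 : Mat n)).PosSemidef := by
  have hherm : (A - lam A n • (1 : Mat n)).IsHermitian := hA.sub (isHermitian_one.smul (.all _))
  refine (posSemidef_iff_sortedEigenvalues_nonneg hherm).2 fun i => ?_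
  rw [sortedEigenvalues_sub_smul_one hA]
  exact sub_nonneg.2 (lam_le_sortedEigenvalues hA i)

theorem sortedEigenvalues_rev_eq_zero_of_mul_eq_zero (hB : B.PosSemidef) (hAB : A * B = 0)
    {i : Fin n} (hi : i < A.rank) : sortedEigenvalues B i.rev = 0 := by
  have hrank : A.rank + B.rank ≤ n := by
    simpa using rank_add_rank_le_card_of_mul_eq_zero hAB
  exact sortedEigenvalues_eq_zero_of_rank_le hB (by grind)

open Polynomial in
theorem sortedEigenvalues_add_of_mul_eq_zero (hA : A.IsHermitian) (hB : B.IsHermitian)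
    (hAB : A * B = 0) (hdisj : ∀ i, sortedEigenvalues A i = 0 ∨ sortedEigenvalues B i = 0)
    (i : Fin n) :
    sortedEigenvalues (A + B) i = sortedEigenvalues A i + sortedEigenvalues B i := by
  refine congrFun (sortedEigenvalues_eq_of_charpoly_eq (hA.add hB)
    ((sortedEigenvalues_antitone hA).add (sortedEigenvalues_antitone hB)) ?_) i
  refine mul_left_cancel₀ (pow_ne_zero (Fintype.card (Fin n)) X_ne_zero) ?_
  rw [← charpoly_mul_charpoly_of_mul_eq_zero hAB, charpoly_eq_prod_sortedEigenvalues hA,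
    charpoly_eq_prod_sortedEigenvalues hB, ← Finset.prod_mul_distrib, ← Finset.card_univ,
    ← Finset.prod_const, ← Finset.prod_mul_distrib]
  refine Finset.prod_congr rfl fun j _ => ?_
  rcases hdisj j with h | h <;> simp only [h, zero_add, add_zero, map_zero] <;> ring

theorem sortedEigenvalues_sub_of_mul_eq_zero (hA : A.PosSemidef) (hB : B.PosSemidef)
    (hAB : A * B = 0) (i : Fin n) :
    sortedEigenvalues (A - B) i = sortedEigenvalues A i - sortedEigenvalues B i.rev := by
  rw [sub_eq_add_neg, sortedEigenvalues_add_of_mul_eq_zero hA.1 hB.1.neg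
    (by rw [Matrix.mul_neg, hAB, neg_zero]) _ i, sortedEigenvalues_neg hB.1, ← sub_eq_add_neg]
  intro j
  rw [sortedEigenvalues_neg hB.1, neg_eq_zero]
  exact (le_or_gt A.rank j).imp (sortedEigenvalues_eq_zero_of_rank_le hA)
    (sortedEigenvalues_rev_eq_zero_of_mul_eq_zero hB hAB)

end SortedEigenvalues

section MultMin

variable {n : ℕ} {A : Mat n}

theorem multMin_le (A : Mat n) : multMin A ≤ n :=
  (Finset.card_filter_le _ _).trans_eq (by simp)

theorem multMin_eq_card_sortedEigenvalues_rev (A : Mat n) :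
    multMin A = (Finset.univ.filter fun i => sortedEigenvalues A (Fin.rev i) = lam A n).card := by
  classical
  refine (Finset.card_bij (fun i _ => (Fin.rev i : ℕ) + 1) ?_ ?_ ?_).symm
  · intro i hi
    grind [sortedEigenvalues]
  · intro i _ j _ hij
    exact Fin.rev_injective (Fin.ext (Nat.succ_injective hij))
  · intro k hk
    simp only [Finset.mem_filter, Finset.mem_Icc] at hk
    refine ⟨Fin.rev ⟨k - 1, by lia⟩, ?_, ?_⟩ <;> grind [sortedEigenvalues]

theorem le_multMin_iff (hA : A.IsHermitian) {i : ℕ} (hi : 1 ≤ i) (hin : i ≤ n) :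
    i ≤ multMin A ↔ lam A (n - i + 1) = lam A n := by
  have hdown (j k : Fin n) (hkj : k ≤ j) (hj : sortedEigenvalues A j.rev = lam A n) :
      sortedEigenvalues A k.rev = lam A n :=
    ((sortedEigenvalues_antitone hA (Fin.rev_le_rev.2 hkj)).trans_eq hj).antisymm
      (lam_le_sortedEigenvalues hA _)
  rw [lam_sub_add_one_eq_sortedEigenvalues_rev A hi hin,
    ← Fin.lt_card_filter_univ_iff_apply_of_imp
      (fun j => sortedEigenvalues A (Fin.rev j) = lam A n) hdown,
    ← multMin_eq_card_sortedEigenvalues_rev]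
  grind

end MultMin

section ComplementarySlackness

variable {n : ℕ} {X G : Mat n}

theorem lam_sub_add_one_eq_lam_of_le_rank (hG : G.IsHermitian)
    (hslack : X * (G - lam G n • (1 : Mat n)) = 0) {i : ℕ} (hi : 1 ≤ i) (hir : i ≤ X.rank) :
    lam G (n - i + 1) = lam G n := by
  have hin : i ≤ n := hir.trans X.rank_le_width
  have hzero := sortedEigenvalues_rev_eq_zero_of_mul_eq_zero (posSemidef_sub_lam_smul_one hG)
    hslack (i := ⟨i - 1, by lia⟩) (by grind)
  rw [sortedEigenvalues_sub_smul_one hG] at hzero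
  rw [lam_sub_add_one_eq_sortedEigenvalues_rev G hi hin]
  exact sub_eq_zero.1 hzero

theorem rank_le_multMin_of_mul_eq_zero (hG : G.IsHermitian)
    (hslack : X * (G - lam G n • (1 : Mat n)) = 0) : X.rank ≤ multMin G := by
  rcases X.rank.eq_zero_or_pos with h | hpos
  · exact h ▸ Nat.zero_le _
  · exact (le_multMin_iff hG hpos X.rank_le_width).2
      (lam_sub_add_one_eq_lam_of_le_rank hG hslack hpos le_rfl)

theorem sortedEigenvalues_sub_smul_of_mul_eq_zero (hX : X.PosSemidef) (hG : G.IsHermitian)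
    (hslack : X * (G - lam G n • (1 : Mat n)) = 0) {η : ℝ} (hη : 0 ≤ η) (i : Fin n) :
    sortedEigenvalues (X - η • G) i = sortedEigenvalues X i - η * sortedEigenvalues G i.rev := by
  set μ := lam G n
  set H := G - μ • (1 : Mat n)
  have hH : H.PosSemidef := posSemidef_sub_lam_smul_one hG
  have hηH : (η • H).PosSemidef := hH.smul hη
  have hXH : X * (η • H) = 0 := by rw [Matrix.mul_smul, hslack, smul_zero]
  have hshift : X - η • G = X - η • H - (η * μ) • (1 : Mat n) := by module
  rw [hshift, sortedEigenvalues_sub_smul_one (hX.1.sub hηH.1),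
    sortedEigenvalues_sub_of_mul_eq_zero hX hηH hXH, sortedEigenvalues_smul hH.1 hη,
    sortedEigenvalues_sub_smul_one hG]
  ring

theorem lam_sub_smul_of_mul_eq_zero (hX : X.PosSemidef) (hG : G.IsHermitian)
    (hslack : X * (G - lam G n • (1 : Mat n)) = 0) {η : ℝ} (hη : 0 ≤ η) {i : ℕ} (hi : 1 ≤ i)
    (hin : i ≤ n) : lam (X - η • G) i = lam X i - η * lam G (n - i + 1) := by
  rw [lam_eq_sortedEigenvalues _ hi hin, lam_eq_sortedEigenvalues _ hi hin,
    lam_sub_add_one_eq_sortedEigenvalues_rev _ hi hin,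
    sortedEigenvalues_sub_smul_of_mul_eq_zero hX hG hslack hη]

theorem sum_lam_sub_smul_of_mul_eq_zero (hX : X.PosSemidef) (hG : G.IsHermitian)
    (hslack : X * (G - lam G n • (1 : Mat n)) = 0) {η : ℝ} (hη : 0 ≤ η) :
    ∑ i ∈ Finset.Icc 1 (multMin G), lam (X - η • G) i
      = X.trace - η * (multMin G : ℝ) * lam G n := by
  have hmn : multMin G ≤ n := multMin_le G
  calc ∑ i ∈ Finset.Icc 1 (multMin G), lam (X - η • G) i
      = ∑ i ∈ Finset.Icc 1 (multMin G), (lam X i - η * lam G n) := by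
        refine Finset.sum_congr rfl fun i hi => ?_
        obtain ⟨hi, him⟩ := Finset.mem_Icc.1 hi
        rw [lam_sub_smul_of_mul_eq_zero hX hG hslack hη hi (him.trans hmn),
          (le_multMin_iff hG hi (him.trans hmn)).1 him]
    _ = X.trace - η * (multMin G : ℝ) * lam G n := by
        rw [Finset.sum_sub_distrib,
          sum_lam_Icc_eq_trace_of_rank_le hX (rank_le_multMin_of_mul_eq_zero hG hslack) hmn,
          Finset.sum_const, Nat.card_Icc, Nat.add_sub_cancel, nsmul_eq_mul]
        ring

end ComplementarySlackness

section FirstOrder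

variable {n : ℕ} {X G : Mat n}

theorem exists_mem_Spectra_mip_eq_eigenvalues (hG : G.IsHermitian) (i : Fin n) :
    ∃ Y ∈ Spectra n, mip Y G = hG.eigenvalues i := by
  set v : Fin n → ℝ := ⇑(hG.eigenvectorBasis i)
  have hv : v ⬝ᵥ v = 1 := by
    simpa only [EuclideanSpace.inner_eq_star_dotProduct, star_trivial, one_pow] using
      inner_self_eq_one_of_norm_eq_one (𝕜 := ℝ) (hG.eigenvectorBasis.norm_eq_one i)
  have hGv : G *ᵥ v = hG.eigenvalues i • v := hG.mulVec_eigenvectorBasis i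
  refine ⟨vecMulVec v v, ⟨by rw [trace_vecMulVec, hv], ?_⟩, ?_⟩
  · simpa using posSemidef_vecMulVec_self_star v
  · rw [mip, trace_mul_comm, mul_vecMulVec, trace_vecMulVec, hGv, smul_dotProduct, hv, smul_eq_mul,
      mul_one]

theorem pos_of_mem_Spectra (hX : X ∈ Spectra n) : 0 < n := by
  rcases n.eq_zero_or_pos with rfl | hn
  · simpa using hX.1
  · exact hn

theorem mul_sub_lam_smul_one_eq_zero_of_mip_sub_nonneg (hX : X ∈ Spectra n) (hG : G.IsHermitian)
    (hfo : ∀ Y ∈ Spectra n, mip (Y - X) G ≥ 0) : X * (G - lam G n • (1 : Mat n)) = 0 := by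
  refine mul_eq_zero_of_trace_mul_nonpos hX.2 (posSemidef_sub_lam_smul_one hG) ?_
  obtain ⟨σ, hσ⟩ := exists_perm_sortedEigenvalues_eq hG
  obtain ⟨Y, hY, hYG⟩ : ∃ Y ∈ Spectra n, mip Y G = lam G n := by
    rw [lam_eq_sortedEigenvalues G (pos_of_mem_Spectra hX) le_rfl, hσ]
    exact exists_mem_Spectra_mip_eq_eigenvalues hG _
  have hle : (X * G).trace ≤ lam G n := by
    simpa [mip, Matrix.sub_mul, ← hYG] using hfo Y hY
  simpa [Matrix.mul_sub, hX.1] using hle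

end FirstOrder

theorem stmt_17_general {n : ℕ} (X : Mat n) (hX : X ∈ Spectra n) (G : Mat n) (hG : G.IsSymm)
    (hfo : ∀ Y ∈ Spectra n, mip (Y - X) G ≥ 0) (η : ℝ) (hη : 0 ≤ η) :
    (∀ i : ℕ, 1 ≤ i → i ≤ X.rank → lam (X - η • G) i = lam X i - η * lam G n) ∧
    (∀ i : ℕ, X.rank < i → i ≤ n → lam (X - η • G) i = -(η * lam G (n - i + 1))) ∧
    (∑ i ∈ Finset.Icc 1 (multMin G), lam (X - η • G) i
      = 1 - η * (multMin G : ℝ) * lam G n) := by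
  have hG : G.IsHermitian := isHermitian_iff_isSymm.2 hG
  have hslack := mul_sub_lam_smul_one_eq_zero_of_mip_sub_nonneg hX hG hfo
  refine ⟨fun i hi hir => ?_, fun i hri hin => ?_, ?_⟩
  · rw [lam_sub_smul_of_mul_eq_zero hX.2 hG hslack hη hi (hir.trans X.rank_le_width),
      lam_sub_add_one_eq_lam_of_le_rank hG hslack hi hir]
  · rw [lam_sub_smul_of_mul_eq_zero hX.2 hG hslack hη (by lia) hin,
      lam_eq_zero_of_rank_lt hX.2 hri hin, zero_sub]
  · rw [sum_lam_sub_smul_of_mul_eq_zero hX.2 hG hslack hη, hX.1]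

theorem stmt_17 {n : ℕ} (hn : 2 ≤ n) (g : Mat n → ℝ)
    (hg : ConvexOn ℝ (SymM n) g)
    (Xs : Mat n) (hXsS : Xs ∈ Spectra n)
    (hmin : ∀ X ∈ Spectra n, g Xs ≤ g X)
    (rs : ℕ) (hrank : Xs.rank = rs)
    (G : Mat n) (hG : G ∈ subdiff g Xs)
    (hfo : ∀ X ∈ Spectra n, mip (X - Xs) G ≥ 0)
    (η : ℝ) (hη : 0 ≤ η) :
    (∀ i : ℕ, 1 ≤ i → i ≤ rs → lam (Xs - η • G) i = lam Xs i - η * lam G n) ∧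
    (∀ i : ℕ, rs < i → i ≤ n → lam (Xs - η • G) i = -(η * lam G (n - i + 1))) ∧
    (∑ i ∈ Finset.Icc 1 (multMin G), lam (Xs - η • G) i
      = 1 - η * (multMin G : ℝ) * lam G n) := by
  subst hrank
  exact stmt_17_general Xs hXsS G hG.1 hfo η hη
end
end
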